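/- arXiv:0801.2509 — 4 statements merged into one kernel-verified Lean document; each statement's English description precedes it below -/
import Mathlib

section
/- Fix 0 < H < 1/2, T > 0, t₁ ≥ 0 and K > 0, and let g(s) = K·|t₁ − s|^H. Then, as t → ∞, ∫_0^t {ψ₀(s;T,t) − ψ₀(s;T)} g(s) ds ∼ (2/π)·cos(πH)·C(H,H)·T^{1/2+H}·K·t^{−1/2}; in particular the order of decay t^{−1/2} does not depend on H. -/
/-!
Substituting `s = t x` turns the integral into exactly
`(cos(πH)/π) K T^(1/2+H) t^(-1/2) * (∫₀¹ kerA + (1/2 - H) J(t) ∫₀¹ kerB)` (`integral_scaling`), where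
`kerA`, `kerB` depend on `t` only through `ε = T/t` and `τ = t₁/t`, and
`J(t) = B_{T/(t+T)}(H+1/2, 1-2H) (t/T)^(1/2+H)` tends to `1/(H+1/2)` (`tendsto_incBeta_mul`).

Both integrals pass to the limit `ε = τ = 0` by dominated convergence. For `kerA` the point is that
the bracket `((1-x)/(1+ε))^(1/2-H) - 1` is bounded by `x + ε`, which cancels the factor
`(x + ε)⁻¹` and leaves the integrable majorant `x^(-1/2-H)` (`abs_kerA_le`). Write
`B = B(1/2, 1/2-H)`. The limit of the `kerB` integral is `B`, that of the `kerA` integral is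
`∫₀¹ x^(-3/2) ((1-x)^(1/2-H) - 1) dx = 2 - (1-2H) B`, by parts (`integral_kerA_zero`), and
`2 - (1-2H) B + (1-2H)/(1+2H) B = 2 C(H,H)`.

Asymptotic equivalence also needs `C(H,H) ≠ 0` (`CHrho_pos`): the last integral is at least `-2`,
so `(1-2H) B ≤ 4`, and `4H < 1 + 2H`.
-/

open Real MeasureTheory Filter Set intervalIntegral

/-- Incomplete beta function `B_x(p,q) = ∫_0^x u^{p-1} (1-u)^{q-1} du`. -/
noncomputable def incBeta (x p q : ℝ) : ℝ := ∫ u in (0:ℝ)..x, u ^ (p - 1) * (1 - u) ^ (q - 1)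

/-- Beta function `B(p,q) = ∫_0^1 u^{p-1} (1-u)^{q-1} du`. -/
noncomputable def betaFn (p q : ℝ) : ℝ := incBeta 1 p q

/-- Infinite-past predictor coefficient `ψ₀(s;T)` of fractional Brownian motion. -/
noncomputable def psi0inf (H T s : ℝ) : ℝ :=
  (Real.cos (π * H) / π) * (1 / (s + T)) * (T / s) ^ (1/2 + H)

/-- Finite-past predictor coefficient `ψ₀(s;T,t)` of fractional Brownian motion. -/
noncomputable def psi0fin (H T t s : ℝ) : ℝ :=
  (Real.cos (π * H) / π) *
    ((1 / (s + T)) * (T / s) ^ (1/2 + H) * ((t - s) / (t + T)) ^ (1/2 - H)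
      + (1/2 - H) * incBeta (T / (t + T)) (H + 1/2) (1 - 2*H) * (1/t)
          * ((t / s) * (t / (t - s))) ^ (1/2 + H))

/-- The constant `C(H,ρ)`. -/
noncomputable def CHrho (H ρ : ℝ) : ℝ :=
  1 - ρ * betaFn (1/2 - H + ρ) (1/2 - H) * (1 - 2*H) / (1 + 2*H)

/-! ### Rescaled kernels and their majorants -/

/-- The rescaled integrand of the difference of the first summand of `ψ₀(s;T,t)` and `ψ₀(s;T)`,
with `s = t x`, `ε = T / t`, `τ = t₁ / t`. -/
noncomputable def kerA (H ε τ x : ℝ) : ℝ :=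
  (x + ε)⁻¹ * x ^ (-(1/2 + H)) * (((1 - x) / (1 + ε)) ^ (1/2 - H) - 1) * |τ - x| ^ H

/-- The rescaled integrand of the second summand of `ψ₀(s;T,t)`, with `s = t x`, `τ = t₁ / t`. -/
noncomputable def kerB (H τ x : ℝ) : ℝ :=
  x ^ (-(1/2 + H)) * (1 - x) ^ (-(1/2 + H)) * |τ - x| ^ H

lemma ae_uIoc_of_Ioo {P : ℝ → Prop} (h : ∀ x ∈ Ioo (0:ℝ) 1, P x) :
    ∀ᵐ x : ℝ, x ∈ uIoc (0:ℝ) 1 → P x := by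
  have h1 : ∀ᵐ x : ℝ, x ≠ 1 := by simp [ae_iff]
  filter_upwards [h1] with x hx hx'
  rw [uIoc_of_le zero_le_one] at hx'
  exact h x ⟨hx'.1, lt_of_le_of_ne hx'.2 hx⟩

lemma intervalIntegrable_of_bound {f g : ℝ → ℝ} (hg : IntervalIntegrable g volume 0 1)
    (hf : Measurable f) (h : ∀ x ∈ Ioo (0:ℝ) 1, |f x| ≤ g x) :
    IntervalIntegrable f volume 0 1 := by
  refine hg.mono_fun' hf.aestronglyMeasurable ?_
  exact (ae_restrict_iff' measurableSet_uIoc).2 (ae_uIoc_of_Ioo h)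

lemma measurable_kerA (H ε τ : ℝ) : Measurable (kerA H ε τ) := by
  unfold kerA; fun_prop

lemma measurable_kerB (H τ : ℝ) : Measurable (kerB H τ) := by
  unfold kerB; fun_prop

lemma abs_sub_rpow_le_one {H τ x : ℝ} (hH : 0 < H) (hτ : τ ∈ Icc (0:ℝ) 1)
    (hx : x ∈ Ioo (0:ℝ) 1) : |τ - x| ^ H ≤ 1 := by
  refine Real.rpow_le_one (abs_nonneg _) ?_ hH.le
  rw [abs_le]; constructor <;> linarith [hτ.1, hτ.2, hx.1, hx.2]

/-- The cancellation that makes dominated convergence work: the bracket is `O(x + ε)`, because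
`y ≤ y ^ a` for `y, a ∈ [0, 1]`. -/
lemma abs_bracket_le {H ε x : ℝ} (hH1 : 0 < H) (hH2 : H < 1/2) (hε : 0 ≤ ε)
    (hx : x ∈ Ioo (0:ℝ) 1) : |((1 - x) / (1 + ε)) ^ (1/2 - H) - 1| ≤ x + ε := by
  obtain ⟨hx0, hx1⟩ := hx
  have h0 : 0 ≤ (1 - x) / (1 + ε) := div_nonneg (by linarith) (by linarith)
  have h1 : (1 - x) / (1 + ε) ≤ 1 := (div_le_one (by linarith)).2 (by linarith)
  have h2 := Real.self_le_rpow_of_le_one h0 h1 (show 1/2 - H ≤ 1 by linarith)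
  have h3 := Real.rpow_le_one h0 h1 (show 0 ≤ 1/2 - H by linarith)
  have h4 : 1 - (1 - x) / (1 + ε) ≤ x + ε := by
    have : 1 - (1 - x) / (1 + ε) = (x + ε) / (1 + ε) := by
      have : 1 + ε ≠ 0 := by linarith
      field_simp; ring
    rw [this]
    exact div_le_self (by linarith) (by linarith)
  rw [abs_le]; constructor <;> linarith

lemma abs_kerA_le {H ε τ x : ℝ} (hH1 : 0 < H) (hH2 : H < 1/2) (hε : 0 ≤ ε)
    (hτ : τ ∈ Icc (0:ℝ) 1) (hx : x ∈ Ioo (0:ℝ) 1) :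
    |kerA H ε τ x| ≤ x ^ (-(1/2 + H)) := by
  have hxε : 0 < x + ε := by linarith [hx.1]
  have h1 := abs_bracket_le hH1 hH2 hε hx
  have h2 := abs_sub_rpow_le_one hH1 hτ hx
  have h3 : 0 ≤ x ^ (-(1/2 + H)) := Real.rpow_nonneg hx.1.le _
  have h4 : 0 ≤ |τ - x| ^ H := Real.rpow_nonneg (abs_nonneg _) _
  unfold kerA
  rw [abs_mul, abs_mul, abs_mul, abs_of_nonneg h3, abs_of_nonneg h4,
    abs_of_pos (inv_pos.2 hxε)]
  calc _ ≤ (x + ε)⁻¹ * x ^ (-(1/2 + H)) * (x + ε) * 1 := by gcongr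
    _ = _ := by field_simp

lemma abs_kerB_le {H τ x : ℝ} (hH1 : 0 < H)
    (hτ : τ ∈ Icc (0:ℝ) 1) (hx : x ∈ Ioo (0:ℝ) 1) :
    |kerB H τ x| ≤ x ^ (-(1/2 + H)) * (1 - x) ^ (-(1/2 + H)) := by
  have h2 := abs_sub_rpow_le_one hH1 hτ hx
  have h3 : 0 ≤ x ^ (-(1/2 + H)) := Real.rpow_nonneg hx.1.le _
  have h5 : 0 ≤ (1 - x) ^ (-(1/2 + H)) := Real.rpow_nonneg (by linarith [hx.2]) _
  have h4 : 0 ≤ |τ - x| ^ H := Real.rpow_nonneg (abs_nonneg _) _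
  unfold kerB
  rw [abs_of_nonneg (by positivity)]
  exact mul_le_of_le_one_right (by positivity) h2

/-- Integrability of the real beta integrand, read off from the norm of the complex one. -/
lemma betaIntegrable {p q : ℝ} (hp : -1 < p) (hq : -1 < q) :
    IntervalIntegrable (fun x : ℝ => x ^ p * (1 - x) ^ q) volume 0 1 := by
  have h := (Complex.betaIntegral_convergent (u := (p + 1 : ℝ)) (v := (q + 1 : ℝ))
    (by simp; linarith) (by simp; linarith)).norm
  refine intervalIntegrable_of_bound h (by fun_prop) fun x hx => le_of_eq ?_
  have h1 : (1 - (x:ℂ)) = ((1 - x : ℝ) : ℂ) := by push_cast; ring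
  rw [norm_mul, h1, Complex.norm_cpow_eq_rpow_re_of_pos hx.1,
    Complex.norm_cpow_eq_rpow_re_of_pos (by linarith [hx.2] : (0:ℝ) < 1 - x), abs_of_nonneg]
  · simp
  · exact mul_nonneg (Real.rpow_nonneg hx.1.le _) (Real.rpow_nonneg (by linarith [hx.2]) _)

lemma powIntegrable {H : ℝ} (hH2 : H < 1/2) :
    IntervalIntegrable (fun x : ℝ => x ^ (-(1/2 + H))) volume 0 1 :=
  intervalIntegral.intervalIntegrable_rpow' (by linarith)

/-! ### Limits of the rescaled integrals -/

lemma tendsto_integral_kerA {H : ℝ} (hH1 : 0 < H) (hH2 : H < 1/2) {ε τ : ℝ → ℝ}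
    (hε : Tendsto ε atTop (nhds 0)) (hτ : Tendsto τ atTop (nhds 0))
    (hε0 : ∀ᶠ t in atTop, 0 ≤ ε t) (hτ0 : ∀ᶠ t in atTop, τ t ∈ Icc (0:ℝ) 1) :
    Tendsto (fun t => ∫ x in (0:ℝ)..1, kerA H (ε t) (τ t) x) atTop
      (nhds (∫ x in (0:ℝ)..1, kerA H 0 0 x)) := by
  refine intervalIntegral.tendsto_integral_filter_of_dominated_convergence
    (fun x => x ^ (-(1/2 + H))) (Eventually.of_forall fun t =>
      (measurable_kerA H _ _).aestronglyMeasurable) ?_ (powIntegrable hH2) ?_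
  · filter_upwards [hε0, hτ0] with t h1 h2
    exact ae_uIoc_of_Ioo fun x hx => abs_kerA_le hH1 hH2 h1 h2 hx
  · refine ae_uIoc_of_Ioo fun x hx => ?_
    unfold kerA
    refine Tendsto.mul (Tendsto.mul (Tendsto.mul ?_ tendsto_const_nhds) ?_) ?_
    · exact (tendsto_const_nhds.add hε).inv₀ (by linarith [hx.1])
    · refine Tendsto.sub_const (Tendsto.rpow_const ?_ (Or.inr (by linarith))) 1
      exact tendsto_const_nhds.div (tendsto_const_nhds.add hε) (by norm_num)
    · exact (hτ.sub_const x).abs.rpow_const (Or.inr hH1.le)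

lemma tendsto_integral_kerB {H : ℝ} (hH1 : 0 < H) (hH2 : H < 1/2) {τ : ℝ → ℝ}
    (hτ : Tendsto τ atTop (nhds 0)) (hτ0 : ∀ᶠ t in atTop, τ t ∈ Icc (0:ℝ) 1) :
    Tendsto (fun t => ∫ x in (0:ℝ)..1, kerB H (τ t) x) atTop
      (nhds (∫ x in (0:ℝ)..1, kerB H 0 x)) := by
  refine intervalIntegral.tendsto_integral_filter_of_dominated_convergence
    (fun x => x ^ (-(1/2 + H)) * (1 - x) ^ (-(1/2 + H))) (Eventually.of_forall fun t =>
      (measurable_kerB H _).aestronglyMeasurable) ?_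
      (betaIntegrable (by linarith) (by linarith)) ?_
  · filter_upwards [hτ0] with t h2
    exact ae_uIoc_of_Ioo fun x hx => abs_kerB_le hH1 h2 hx
  · refine ae_uIoc_of_Ioo fun x hx => ?_
    unfold kerB
    exact tendsto_const_nhds.mul ((hτ.sub_const x).abs.rpow_const (Or.inr hH1.le))

/-! ### Values of the limits and positivity of `C(H,H)` -/

lemma integral_kerB_zero (H : ℝ) :
    ∫ x in (0:ℝ)..1, kerB H 0 x = betaFn (1/2 - H + H) (1/2 - H) := by
  unfold betaFn incBeta
  refine intervalIntegral.integral_congr_Ioo_of_le zero_le_one fun x hx => ?_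
  simp only [kerB]
  rw [zero_sub, abs_neg, abs_of_pos hx.1, mul_right_comm, ← Real.rpow_add hx.1]
  congr 2 <;> ring

/-- Integration by parts against the primitive `-2 x ^ (-1/2)` of `x ^ (-3/2)`. -/
lemma integral_kerA_zero {H : ℝ} (hH1 : 0 < H) (hH2 : H < 1/2) :
    ∫ x in (0:ℝ)..1, kerA H 0 0 x
      = 2 - (1 - 2 * H) * betaFn (1/2 - H + H) (1/2 - H) := by
  have hA : IntervalIntegrable (kerA H 0 0) volume 0 1 :=
    intervalIntegrable_of_bound (powIntegrable hH2) (measurable_kerA H 0 0)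
      fun x hx => abs_kerA_le hH1 hH2 le_rfl ⟨le_rfl, zero_le_one⟩ hx
  have hB : IntervalIntegrable
      (fun x : ℝ => x ^ (1/2 - H + H - 1) * (1 - x) ^ (1/2 - H - 1)) volume 0 1 :=
    betaIntegrable (by linarith) (by linarith)
  -- the derivative of `-2 x ^ (-1/2) ((1 - x) ^ (1/2 - H) - 1)`, integrated over `[0, 1]`
  have key : ∫ x in (0:ℝ)..1, (kerA H 0 0 x
      + (1 - 2 * H) * (x ^ (1/2 - H + H - 1) * (1 - x) ^ (1/2 - H - 1))) = 2 := by
    rw [intervalIntegral.integral_eq_sub_of_hasDerivAt_of_le (zero_le_one)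
      (f := fun x : ℝ => -2 * x ^ (-(1/2) : ℝ) * ((1 - x) ^ (1/2 - H) - 1)) ?_ ?_
      (hA.add (hB.const_mul _))]
    · rw [sub_self, Real.zero_rpow (by linarith : (1/2 - H) ≠ 0)]; simp
    · intro x hx
      rcases eq_or_lt_of_le hx.1 with h | h
      · subst h
        -- at the origin the primitive is bounded by `2 √x`
        have hlim : Tendsto (fun x : ℝ => 2 * x ^ (1/2 : ℝ)) (nhdsWithin 0 (Icc 0 1)) (nhds 0) := by
          have : Continuous (fun x : ℝ => 2 * x ^ (1/2 : ℝ)) :=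
            continuous_const.mul (Real.continuous_rpow_const (by norm_num))
          have := (this.tendsto 0).mono_left (nhdsWithin_le_nhds (s := Icc (0:ℝ) 1))
          simpa using this
        unfold ContinuousWithinAt
        simp only [sub_zero, Real.one_rpow, sub_self, mul_zero]
        refine squeeze_zero_norm' ?_ hlim
        filter_upwards [self_mem_nhdsWithin] with y hy
        rcases eq_or_lt_of_le hy.1 with h0 | h0
        · subst h0; simp
        · have h2 := Real.self_le_rpow_of_le_one (by linarith [hy.2] : 0 ≤ 1 - y)
            (by linarith) (show 1/2 - H ≤ 1 by linarith)
          have h3 := Real.rpow_le_one (by linarith [hy.2] : 0 ≤ 1 - y)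
            (by linarith) (show 0 ≤ 1/2 - H by linarith)
          have h4 : |(1 - y) ^ (1/2 - H) - 1| ≤ y := by
            rw [abs_le]; constructor <;> linarith
          have h5 : 0 < y ^ (-(1/2) : ℝ) := Real.rpow_pos_of_pos h0 _
          rw [Real.norm_eq_abs, abs_mul, abs_mul, abs_of_pos h5]
          calc _ ≤ |(-2:ℝ)| * y ^ (-(1/2) : ℝ) * y := by gcongr
            _ = 2 * (y ^ (-(1/2) : ℝ) * y ^ (1:ℝ)) := by
              rw [Real.rpow_one]; norm_num [mul_assoc]
            _ = _ := by rw [← Real.rpow_add h0]; norm_num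
      · refine ContinuousAt.continuousWithinAt ?_
        refine ContinuousAt.mul (continuousAt_const.mul
          (Real.continuousAt_rpow_const _ _ (Or.inl h.ne'))) (ContinuousAt.sub ?_ continuousAt_const)
        exact (continuousAt_const.sub continuousAt_id).rpow_const (Or.inr (by linarith))
    · intro x hx
      have hx1 : 0 < 1 - x := by linarith [hx.2]
      have d1 : HasDerivAt (fun x : ℝ => -2 * x ^ (-(1/2) : ℝ))
          (-2 * (-(1/2) * x ^ (-(1/2) - 1 : ℝ))) x :=
        (Real.hasDerivAt_rpow_const (Or.inl hx.1.ne')).const_mul _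
      have d2 : HasDerivAt (fun x : ℝ => (1 - x) ^ (1/2 - H) - 1)
          (-1 * (1/2 - H) * (1 - x) ^ (1/2 - H - 1)) x :=
        (((hasDerivAt_id x).const_sub 1).rpow_const (Or.inl hx1.ne')).sub_const 1
      refine (d1.mul d2).congr_deriv ?_
      simp only [kerA, add_zero, div_one, zero_sub, abs_neg, abs_of_pos hx.1]
      have e1 : x⁻¹ * x ^ (-(1/2 + H)) * ((1 - x) ^ (1/2 - H) - 1) * x ^ H
          = x ^ (-(1/2) - 1 : ℝ) * ((1 - x) ^ (1/2 - H) - 1) := by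
        rw [← Real.rpow_neg_one x, mul_right_comm, ← Real.rpow_add hx.1, ← Real.rpow_add hx.1]
        congr 2; ring
      have e2 : (1/2 - H + H - 1 : ℝ) = -(1/2) := by ring
      rw [e1, e2]; ring
  rw [intervalIntegral.integral_add hA (hB.const_mul _),
    intervalIntegral.integral_const_mul] at key
  unfold betaFn incBeta
  linarith

/-- `C(H,H) > 0`: since `(1 - x) ^ (1/2 - H) ≥ 1 - x`, the integral of `kerA H 0 0` is at least
`-∫ x ^ (-1/2) = -2`, which by `integral_kerA_zero` bounds the beta function from above. -/
lemma CHrho_pos {H : ℝ} (hH1 : 0 < H) (hH2 : H < 1/2) : 0 < CHrho H H := by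
  have hA : IntervalIntegrable (kerA H 0 0) volume 0 1 :=
    intervalIntegrable_of_bound (powIntegrable hH2) (measurable_kerA H 0 0)
      fun x hx => abs_kerA_le hH1 hH2 le_rfl ⟨le_rfl, zero_le_one⟩ hx
  have h2 : ∫ x in (0:ℝ)..1, x ^ (-(1/2) : ℝ) = 2 := by
    rw [integral_rpow (Or.inl (by norm_num))]; norm_num
  have hle : ∫ x in (0:ℝ)..1, -(x ^ (-(1/2) : ℝ)) ≤ ∫ x in (0:ℝ)..1, kerA H 0 0 x := by
    refine intervalIntegral.integral_mono_on_of_le_Ioo zero_le_one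
      (intervalIntegral.intervalIntegrable_rpow' (by norm_num)).neg hA fun x hx => ?_
    have h1 := (abs_le.1 (abs_bracket_le hH1 hH2 le_rfl hx)).1
    simp only [kerA, zero_sub, abs_neg, abs_of_pos hx.1, show x + 0 = x from add_zero x]
    have e1 : x⁻¹ * x ^ (-(1/2 + H)) * (((1 - x) / (1 + 0)) ^ (1/2 - H) - 1) * x ^ H
        = x⁻¹ * x ^ (-(1/2) : ℝ) * (((1 - x) / (1 + 0)) ^ (1/2 - H) - 1) := by
      rw [mul_right_comm, mul_assoc x⁻¹, ← Real.rpow_add hx.1]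
      congr 3; ring
    have hp : 0 < x⁻¹ * x ^ (-(1/2) : ℝ) :=
      mul_pos (inv_pos.2 hx.1) (Real.rpow_pos_of_pos hx.1 _)
    rw [e1]
    calc -(x ^ (-(1/2) : ℝ)) = x⁻¹ * x ^ (-(1/2) : ℝ) * (-(x + 0)) := by
          have := hx.1.ne'
          field_simp; ring
      _ ≤ _ := mul_le_mul_of_nonneg_left h1 hp.le
  rw [intervalIntegral.integral_neg, h2, integral_kerA_zero hH1 hH2] at hle
  unfold CHrho
  rw [sub_pos, div_lt_one (by linarith)]
  nlinarith

/-! ### The incomplete beta function near zero -/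

/-- `B_y(p,q) ∼ y ^ p / p` as `y → 0`, for `q ≤ 1`, after rescaling `u = y v`. -/
lemma tendsto_incBeta {p q : ℝ} (hp : 0 < p) (hq : q ≤ 1) {y : ℝ → ℝ}
    (hy : Tendsto y atTop (nhds 0)) (hy0 : ∀ᶠ t in atTop, 0 < y t) :
    Tendsto (fun t => incBeta (y t) p q / y t ^ p) atTop (nhds (1 / p)) := by
  have hlim : Tendsto (fun t => ∫ v in (0:ℝ)..1, v ^ (p - 1) * (1 - y t * v) ^ (q - 1)) atTop
      (nhds (∫ v in (0:ℝ)..1, v ^ (p - 1))) := by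
    refine intervalIntegral.tendsto_integral_filter_of_dominated_convergence
      (fun v => v ^ (p - 1) * (1/2) ^ (q - 1)) (Eventually.of_forall fun t => ?_) ?_
      ((intervalIntegral.intervalIntegrable_rpow' (by linarith)).mul_const _) ?_
    · exact (by fun_prop : Measurable _).aestronglyMeasurable
    · filter_upwards [hy0, hy.eventually (gt_mem_nhds (by norm_num : (0:ℝ) < 1/2))] with t h0 h1
      refine ae_uIoc_of_Ioo fun x hx => ?_
      have h2 : 1/2 ≤ 1 - y t * x := by nlinarith [hx.1, hx.2]
      have h3 : 0 ≤ x ^ (p - 1) := Real.rpow_nonneg hx.1.le _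
      have h4 : 0 ≤ (1 - y t * x) ^ (q - 1) := Real.rpow_nonneg (by linarith) _
      rw [Real.norm_eq_abs, abs_of_nonneg (by positivity)]
      exact mul_le_mul_of_nonneg_left
        (Real.rpow_le_rpow_of_nonpos (by norm_num) h2 (by linarith)) h3
    · refine ae_uIoc_of_Ioo fun x hx => ?_
      have : Tendsto (fun t => (1 - y t * x) ^ (q - 1)) atTop (nhds 1) := by
        have h := ((hy.mul_const x).const_sub 1).rpow_const (p := q - 1) (Or.inl (by norm_num))
        simpa using h
      simpa using this.const_mul (x ^ (p - 1))
  have h1 : ∫ v in (0:ℝ)..1, v ^ (p - 1) = 1 / p := by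
    rw [integral_rpow (Or.inl (by linarith))]
    simp [Real.zero_rpow hp.ne']
  rw [h1] at hlim
  refine hlim.congr' ?_
  filter_upwards [hy0] with t h0
  rw [eq_div_iff (Real.rpow_pos_of_pos h0 _).ne', incBeta]
  have h2 := intervalIntegral.mul_integral_comp_mul_left (a := 0) (b := 1) (y t)
    (f := fun u => u ^ (p - 1) * (1 - u) ^ (q - 1))
  rw [mul_zero, mul_one] at h2
  rw [← h2, ← intervalIntegral.integral_mul_const, ← intervalIntegral.integral_const_mul]
  refine intervalIntegral.integral_congr_Ioo_of_le zero_le_one fun x hx => ?_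
  rw [Real.mul_rpow h0.le hx.1.le, Real.rpow_sub_one h0.ne']
  field_simp

/-! ### The scaling identity -/

/-- The integrand of the theorem at `s = t x`, written in terms of the rescaled kernels. -/
lemma integrand_scaling {H T t₁ K t x : ℝ} (hT : 0 < T) (ht : 0 < t) (hx : x ∈ Ioo (0:ℝ) 1) :
    t * ((psi0fin H T t (t * x) - psi0inf H T (t * x)) * (K * |t₁ - t * x| ^ H))
      = (Real.cos (π * H) / π * K * T ^ (1/2 + H) * t ^ (-(1/2 : ℝ))) *
        (kerA H (T / t) (t₁ / t) x + (1/2 - H) *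
          (incBeta (T / (t + T)) (H + 1/2) (1 - 2*H) * (t / T) ^ (1/2 + H)) *
            kerB H (t₁ / t) x) := by
  obtain ⟨hx0, hx1⟩ := hx
  have hx1' : 0 < 1 - x := by linarith
  have f1 : (T / (t * x)) ^ (1/2 + H) = T ^ (1/2 + H) * (t ^ (1/2 + H))⁻¹ * x ^ (-(1/2 + H)) := by
    rw [Real.div_rpow hT.le (by positivity), Real.mul_rpow ht.le hx0.le, Real.rpow_neg hx0.le,
      div_eq_mul_inv, mul_inv, mul_assoc]
  have f2 : |t₁ - t * x| ^ H = t ^ H * |t₁ / t - x| ^ H := by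
    rw [← Real.mul_rpow ht.le (abs_nonneg _)]
    congr 1
    rw [← abs_of_pos ht, ← abs_mul, abs_of_pos ht]
    congr 1; field_simp
  have f3 : 1 / (t * x + T) = t⁻¹ * (x + T / t)⁻¹ := by
    rw [← mul_inv, one_div]; congr 1; field_simp
  have f4 : (t - t * x) / (t + T) = (1 - x) / (1 + T / t) := by field_simp
  have f5 : (t / (t * x) * (t / (t - t * x))) ^ (1/2 + H)
      = x ^ (-(1/2 + H)) * (1 - x) ^ (-(1/2 + H)) := by
    have : t / (t * x) * (t / (t - t * x)) = x⁻¹ * (1 - x)⁻¹ := by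
      have : t - t * x ≠ 0 := by
        rw [← mul_one_sub]; positivity
      field_simp
    rw [this, Real.mul_rpow (by positivity) (by positivity), Real.inv_rpow hx0.le,
      Real.inv_rpow hx1'.le, Real.rpow_neg hx0.le, Real.rpow_neg hx1'.le]
  have f6 : t ^ (1/2 + H) = t ^ (1/2 : ℝ) * t ^ H := Real.rpow_add ht _ _
  have f7 : t ^ (-(1/2) : ℝ) = (t ^ (1/2 : ℝ))⁻¹ := Real.rpow_neg ht.le _
  have p1 : 0 < t ^ (1/2 : ℝ) := Real.rpow_pos_of_pos ht _
  have p2 : 0 < t ^ H := Real.rpow_pos_of_pos ht _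
  have p3 : 0 < T ^ (1/2 + H) := Real.rpow_pos_of_pos hT _
  unfold psi0fin psi0inf kerA kerB
  rw [f1, f2, f3, f4, f5, Real.div_rpow ht.le hT.le, f6, f7]
  generalize t ^ (1/2 : ℝ) = r at *
  generalize t ^ H = th at *
  generalize T ^ (1/2 + H) = Th at *
  generalize x ^ (-(1/2 + H)) = X at *
  generalize (1 - x) ^ (-(1/2 + H)) = Y at *
  generalize |t₁ / t - x| ^ H = D at *
  generalize ((1 - x) / (1 + T / t)) ^ (1/2 - H) = E at *
  generalize (x + T / t)⁻¹ = q at *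
  generalize incBeta (T / (t + T)) (H + 1/2) (1 - 2*H) = I at *
  field_simp
  ring

/-- The exact form of the integral for `t ≥ t₁`, to which the limits of the rescaled integrals
and of the incomplete beta function apply. -/
lemma integral_scaling {H T t₁ K t : ℝ} (hH1 : 0 < H) (hH2 : H < 1/2) (hT : 0 < T)
    (ht₁ : 0 ≤ t₁) (ht : 0 < t) (htt : t₁ ≤ t) :
    ∫ s in (0:ℝ)..t, (psi0fin H T t s - psi0inf H T s) * (K * |t₁ - s| ^ H)
      = (Real.cos (π * H) / π * K * T ^ (1/2 + H) * t ^ (-(1/2 : ℝ))) *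
        ((∫ x in (0:ℝ)..1, kerA H (T / t) (t₁ / t) x) + (1/2 - H) *
          (incBeta (T / (t + T)) (H + 1/2) (1 - 2*H) * (t / T) ^ (1/2 + H)) *
            ∫ x in (0:ℝ)..1, kerB H (t₁ / t) x) := by
  have hτ : t₁ / t ∈ Icc (0:ℝ) 1 := ⟨by positivity, (div_le_one ht).2 htt⟩
  have hA : IntervalIntegrable (kerA H (T / t) (t₁ / t)) volume 0 1 :=
    intervalIntegrable_of_bound (powIntegrable hH2) (measurable_kerA H _ _)
      fun x hx => abs_kerA_le hH1 hH2 (by positivity) hτ hx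
  have hB : IntervalIntegrable (kerB H (t₁ / t)) volume 0 1 :=
    intervalIntegrable_of_bound (betaIntegrable (by linarith) (by linarith)) (measurable_kerB H _)
      fun x hx => abs_kerB_le hH1 hτ hx
  have h := intervalIntegral.mul_integral_comp_mul_left (a := 0) (b := 1) t
    (f := fun s => (psi0fin H T t s - psi0inf H T s) * (K * |t₁ - s| ^ H))
  rw [mul_zero, mul_one] at h
  rw [← h, ← intervalIntegral.integral_const_mul, ← intervalIntegral.integral_const_mul,
    ← intervalIntegral.integral_add hA (hB.const_mul _), ← intervalIntegral.integral_const_mul]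
  exact intervalIntegral.integral_congr_Ioo_of_le zero_le_one
    fun x hx => integrand_scaling hT ht hx

/-- `tendsto_incBeta` at `y = T / (t + T)`, normalised by `T / t` in place of `y`. -/
lemma tendsto_incBeta_mul {H T : ℝ} (hH1 : 0 < H) (hT : 0 < T) :
    Tendsto (fun t : ℝ => incBeta (T / (t + T)) (H + 1/2) (1 - 2*H) * (t / T) ^ (1/2 + H))
      atTop (nhds (1 / (H + 1/2))) := by
  have hy : Tendsto (fun t : ℝ => T / (t + T)) atTop (nhds 0) :=
    tendsto_const_nhds.div_atTop (tendsto_atTop_add_const_right _ _ tendsto_id)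
  have hy0 : ∀ᶠ t : ℝ in atTop, 0 < T / (t + T) := by
    filter_upwards [eventually_gt_atTop 0] with t ht
    positivity
  have h1 := tendsto_incBeta (p := H + 1/2) (q := 1 - 2*H) (by linarith) (by linarith) hy hy0
  -- `(t / T) (T / (t + T)) = 1 - T / (t + T) → 1`
  have h2 : Tendsto (fun t : ℝ => (1 - T / (t + T)) ^ (H + 1/2)) atTop (nhds 1) := by
    have h := (hy.const_sub 1).rpow_const (p := H + 1/2) (Or.inl (by norm_num))
    simpa using h
  have h3 := h1.mul h2
  rw [mul_one] at h3
  refine h3.congr' ?_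
  filter_upwards [eventually_gt_atTop 0] with t ht
  have e : 1 - T / (t + T) = t / T * (T / (t + T)) := by field_simp; ring
  have hp : 0 < (T / (t + T)) ^ (H + 1/2) := Real.rpow_pos_of_pos (by positivity) _
  rw [e, Real.mul_rpow (by positivity) (by positivity), add_comm (1/2) H]
  field_simp

/-- Remark 2.2 : for `g(s) = K |t₁ - s|^H` (a constant multiple of the norm of the
fractional Brownian motion increment), as `t → ∞`,
`∫_0^t (ψ₀(s;T,t) - ψ₀(s;T)) g(s) ds ∼ (2/π) cos(πH) C(H,H) T^{1/2+H} K t^{-1/2}`. -/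
theorem baxter_stmt1 (H T t₁ K : ℝ) (hH1 : 0 < H) (hH2 : H < 1/2) (hT : 0 < T)
    (ht₁ : 0 ≤ t₁) (hK : 0 < K) :
    Tendsto (fun t : ℝ =>
        (∫ s in (0:ℝ)..t, (psi0fin H T t s - psi0inf H T s) * (K * |t₁ - s| ^ H))
          / ((2/π) * Real.cos (π * H) * CHrho H H * T ^ (1/2 + H) * K * t ^ (-(1/2 : ℝ))))
      atTop (nhds 1) := by
  have hτ : Tendsto (fun t : ℝ => t₁ / t) atTop (nhds 0) :=
    tendsto_const_nhds.div_atTop tendsto_id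
  have hε : Tendsto (fun t : ℝ => T / t) atTop (nhds 0) :=
    tendsto_const_nhds.div_atTop tendsto_id
  have hε0 : ∀ᶠ t : ℝ in atTop, 0 ≤ T / t := by
    filter_upwards [eventually_gt_atTop 0] with t ht
    positivity
  have hτ0 : ∀ᶠ t : ℝ in atTop, t₁ / t ∈ Icc (0:ℝ) 1 := by
    filter_upwards [eventually_gt_atTop 0, eventually_ge_atTop t₁] with t ht htt
    exact ⟨by positivity, (div_le_one ht).2 htt⟩
  have hlim := (tendsto_integral_kerA hH1 hH2 hε hτ hε0 hτ0).add
    (((tendsto_incBeta_mul hH1 hT).const_mul (1/2 - H)).mul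
      (tendsto_integral_kerB hH1 hH2 hτ hτ0))
  have hC := CHrho_pos hH1 hH2
  have hval : (∫ x in (0:ℝ)..1, kerA H 0 0 x) + (1/2 - H) * (1 / (H + 1/2)) *
      ∫ x in (0:ℝ)..1, kerB H 0 x = 2 * CHrho H H := by
    rw [integral_kerA_zero hH1 hH2, integral_kerB_zero, CHrho]
    have : H + 1/2 ≠ 0 := by linarith
    have : 1 + 2 * H ≠ 0 := by linarith
    field_simp
    ring
  rw [hval] at hlim
  have hfin := hlim.div_const (2 * CHrho H H)
  rw [div_self (by positivity)] at hfin
  refine hfin.congr' ?_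
  filter_upwards [eventually_gt_atTop 0, eventually_ge_atTop t₁] with t ht htt
  rw [integral_scaling hH1 hH2 hT ht₁ ht htt]
  have hcos : 0 < Real.cos (π * H) := by
    apply Real.cos_pos_of_mem_Ioo
    constructor <;> nlinarith [Real.pi_pos]
  have p1 : 0 < t ^ (-(1/2) : ℝ) := Real.rpow_pos_of_pos ht _
  have p3 : 0 < T ^ (1/2 + H) := Real.rpow_pos_of_pos hT _
  have := Real.pi_pos
  generalize (∫ x in (0:ℝ)..1, kerA H (T / t) (t₁ / t) x) + (1/2 - H) *
          (incBeta (T / (t + T)) (H + 1/2) (1 - 2*H) * (t / T) ^ (1/2 + H)) *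
            ∫ x in (0:ℝ)..1, kerB H (t₁ / t) x = S
  generalize t ^ (-(1/2) : ℝ) = r at *
  generalize T ^ (1/2 + H) = Th at *
  field_simp
end

section
/- Let 0 < H < 1/2 and let ρ satisfy −1/2 + H < ρ < 1/2 + H. Then ∫_0^1 ((1−s)^{1/2−H} − 1)·s^{ρ − 3/2 − H} ds = (1 − (1/2−H)·B(1/2−H+ρ, 1/2−H)) / (1/2 + H − ρ), where the integral converges absolutely. -/
/-!
With `a = 1/2 - H` and `c = 1/2 + H - ρ`, both in `(0, 1)`, the integrand is
`((1 - s) ^ a - 1) * s ^ (-c - 1)`. The function `F s = ((1 - s) ^ a - 1) * s ^ (-c)` satisfies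
`F' s = -a * s ^ (-c) * (1 - s) ^ (a - 1) - c * ((1 - s) ^ a - 1) * s ^ (-c - 1)` on `(0, 1)`,
and `F 1 - F 0 = -1`, so the fundamental theorem of calculus gives
`-1 = -a * B(1 - c, a) - c * I`, where `I` is the integral to be computed.
The singularity at `0` is controlled by `|(1 - s) ^ a - 1| ≤ s` (`abs_one_sub_rpow_sub_one_le`):
it bounds the integrand by the integrable function `s ^ (-c)` and `F` by `s ^ (1 - c)`, which
tends to `0`.
-/

open Real MeasureTheory Filter Set intervalIntegral

lemma abs_one_sub_rpow_sub_one_le {a s : ℝ} (ha0 : 0 ≤ a) (ha1 : a ≤ 1) (hs0 : 0 ≤ s)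
    (hs1 : s ≤ 1) : |(1 - s) ^ a - 1| ≤ s := by
  rcases hs1.eq_or_lt with rfl | hs1
  · have h0 := Real.rpow_nonneg (show (0:ℝ) ≤ 1 - 1 by norm_num) a
    have h1 := Real.rpow_le_one (show (0:ℝ) ≤ 1 - 1 by norm_num) (by norm_num) ha0
    rw [abs_le]; constructor <;> linarith
  · have h1 := Real.rpow_le_one (show 0 ≤ 1 - s by linarith) (by linarith) ha0
    have h2 := Real.rpow_le_rpow_of_exponent_ge (show 0 < 1 - s by linarith) (by linarith) ha1
    rw [Real.rpow_one] at h2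
    rw [abs_le]; constructor <;> linarith

/-- Absolute convergence of the real beta integral, obtained by taking norms in the complex one. -/
lemma intervalIntegrable_beta {p q : ℝ} (hp : 0 < p) (hq : 0 < q) :
    IntervalIntegrable (fun u : ℝ => u ^ (p - 1) * (1 - u) ^ (q - 1)) volume 0 1 := by
  have h := (Complex.betaIntegral_convergent (u := (p : ℂ)) (v := (q : ℂ))
    (by simpa using hp) (by simpa using hq)).norm
  refine h.congr_uIoo fun x hx => ?_
  rw [uIoo_of_le zero_le_one] at hx
  have h1 : (1 - (x : ℂ)) = ((1 - x : ℝ) : ℂ) := by push_cast; rfl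
  simp only [norm_mul]
  rw [h1, Complex.norm_cpow_eq_rpow_re_of_pos hx.1,
    Complex.norm_cpow_eq_rpow_re_of_pos (by linarith [hx.2] : 0 < 1 - x)]
  simp

lemma intervalIntegrable_one_sub_rpow_sub_one_mul {a c : ℝ} (ha0 : 0 < a) (ha1 : a ≤ 1)
    (hc1 : c < 1) :
    IntervalIntegrable (fun s : ℝ => ((1 - s) ^ a - 1) * s ^ (-c - 1)) volume 0 1 := by
  have hg : IntervalIntegrable (fun s : ℝ => s ^ (-c)) volume 0 1 :=
    intervalIntegrable_rpow' (by linarith)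
  refine hg.mono_fun (by fun_prop) ?_
  rw [EventuallyLE, ae_restrict_iff' measurableSet_uIoc]
  refine Eventually.of_forall fun s hs => ?_
  rw [uIoc_of_le zero_le_one] at hs
  have hb := abs_one_sub_rpow_sub_one_le ha0.le ha1 hs.1.le hs.2
  rw [Real.norm_eq_abs, Real.norm_eq_abs, abs_mul, abs_of_pos (Real.rpow_pos_of_pos hs.1 _),
    abs_of_pos (Real.rpow_pos_of_pos hs.1 _)]
  calc |(1 - s) ^ a - 1| * s ^ (-c - 1) ≤ s * s ^ (-c - 1) :=
        mul_le_mul_of_nonneg_right hb (Real.rpow_nonneg hs.1.le _)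
    _ = s ^ (-c) := by
        rw [Real.rpow_sub_one hs.1.ne']; field_simp [hs.1.ne']

lemma continuousOn_one_sub_rpow_sub_one_mul {a c : ℝ} (ha0 : 0 < a) (ha1 : a ≤ 1)
    (hc1 : c < 1) :
    ContinuousOn (fun s : ℝ => ((1 - s) ^ a - 1) * s ^ (-c)) (Icc 0 1) := by
  intro s hs
  rcases hs.1.eq_or_lt with rfl | hs0
  · have hlim : Tendsto (fun s : ℝ => s ^ (1 - c)) (nhdsWithin 0 (Icc 0 1)) (nhds 0) := by
      have := (Real.continuousAt_rpow_const (0 : ℝ) (1 - c) (Or.inr (by linarith))).tendsto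
      rw [Real.zero_rpow (by linarith)] at this
      exact this.mono_left nhdsWithin_le_nhds
    rw [ContinuousWithinAt, sub_zero, Real.one_rpow, sub_self, zero_mul]
    refine squeeze_zero_norm' ?_ hlim
    filter_upwards [self_mem_nhdsWithin] with x hx
    rcases hx.1.eq_or_lt with rfl | hx0
    · simp [Real.zero_rpow (show 1 - c ≠ 0 by linarith)]
    · rw [Real.norm_eq_abs, abs_mul, abs_of_pos (Real.rpow_pos_of_pos hx0 _)]
      calc |(1 - x) ^ a - 1| * x ^ (-c) ≤ x * x ^ (-c) :=
            mul_le_mul_of_nonneg_right (abs_one_sub_rpow_sub_one_le ha0.le ha1 hx.1 hx.2)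
              (Real.rpow_nonneg hx.1 _)
        _ = x ^ (1 - c) := by
            rw [sub_eq_add_neg, Real.rpow_add hx0, Real.rpow_one]
  · refine ContinuousAt.continuousWithinAt ?_
    refine ContinuousAt.mul (ContinuousAt.sub (ContinuousAt.rpow_const ?_ (Or.inr ha0.le))
      continuousAt_const) (Real.continuousAt_rpow_const _ _ (Or.inl hs0.ne'))
    fun_prop

lemma hasDerivAt_one_sub_rpow_sub_one_mul {a c s : ℝ} (hs0 : 0 < s) (hs1 : s < 1) :
    HasDerivAt (fun s : ℝ => ((1 - s) ^ a - 1) * s ^ (-c))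
      (-a * (s ^ (1 - c - 1) * (1 - s) ^ (a - 1)) - c * (((1 - s) ^ a - 1) * s ^ (-c - 1))) s := by
  have h1 : HasDerivAt (fun s : ℝ => (1 - s) ^ a - 1) (-1 * a * (1 - s) ^ (a - 1)) s :=
    (((hasDerivAt_id s).const_sub 1).rpow_const (Or.inl (by simp; linarith))).sub_const 1
  have h2 : HasDerivAt (fun s : ℝ => s ^ (-c)) (-c * s ^ (-c - 1)) s :=
    Real.hasDerivAt_rpow_const (Or.inl hs0.ne')
  refine (h1.mul h2).congr_deriv ?_
  rw [show 1 - c - 1 = -c by ring]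
  ring

/-- The integral identity (used in (2.2)) :
`∫_0^1 ((1-s)^{1/2-H} - 1) s^{ρ-3/2-H} ds = (1 - (1/2-H) B(1/2-H+ρ, 1/2-H))/(1/2+H-ρ)`,
the integral being absolutely convergent. -/
theorem baxter_stmt2 (H ρ : ℝ) (hH1 : 0 < H) (hH2 : H < 1/2)
    (hρ1 : -1/2 + H < ρ) (hρ2 : ρ < 1/2 + H) :
    IntervalIntegrable
        (fun s : ℝ => ((1 - s) ^ (1/2 - H) - 1) * s ^ (ρ - 3/2 - H)) volume 0 1 ∧
      (∫ s in (0:ℝ)..1, ((1 - s) ^ (1/2 - H) - 1) * s ^ (ρ - 3/2 - H))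
        = (1 - (1/2 - H) * betaFn (1/2 - H + ρ) (1/2 - H)) / (1/2 + H - ρ) := by
  set a : ℝ := 1 / 2 - H with ha
  obtain ⟨c, hc⟩ : ∃ c : ℝ, c = 1 / 2 + H - ρ := ⟨_, rfl⟩
  have ha0 : 0 < a := by linarith
  have ha1 : a ≤ 1 := by linarith
  have hc0 : 0 < c := by linarith
  have hc1 : c < 1 := by linarith
  rw [← hc, show a + ρ = 1 - c by linarith, show ρ - 3 / 2 - H = -c - 1 by linarith]
  have hf := intervalIntegrable_one_sub_rpow_sub_one_mul ha0 ha1 hc1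
  have hB := intervalIntegrable_beta (p := 1 - c) (q := a) (by linarith) ha0
  refine ⟨hf, ?_⟩
  have key := integral_eq_sub_of_hasDerivAt_of_le zero_le_one
    (continuousOn_one_sub_rpow_sub_one_mul ha0 ha1 hc1)
    (fun s hs => hasDerivAt_one_sub_rpow_sub_one_mul hs.1 hs.2)
    ((hB.const_mul (-a)).sub (hf.const_mul c))
  rw [integral_sub (hB.const_mul (-a)) (hf.const_mul c), intervalIntegral.integral_const_mul,
    intervalIntegral.integral_const_mul, sub_self, Real.zero_rpow ha0.ne', Real.one_rpow, sub_zero,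
    Real.one_rpow, sub_self, zero_mul] at key
  rw [betaFn, incBeta, eq_div_iff hc0.ne']
  linarith
end

section
/- Assume the standing hypotheses on c and a. For every r ∈ (1, ∞) there exists N > 0 such that 0 < δ_k(t,u,v) ≤ f_k(0)·(r·cos(πH))^k·t^{−1} for all u, v > 0, all integers k ≥ 1, and all t ≥ N. -/
/-!
The standing hypotheses make `c` and `a` regularly varying at infinity, of index `-(1/2 - H)` and
`-(3/2 + H)`, with `t² c(t) a(t)` convergent. Substituting `v = t s` in `β(t) = ∫ c(v) a(t+v) dv`
gives `t β(t) → cos(πH) / π` by dominated convergence (`beta_asymp`, `beta_props`): regular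
variation and monotonicity give doubling inequalities, hence power bounds for the integrand at
infinity, and the growth condition on `c` at `0` takes care of small `v`. The limit is a beta
integral evaluated by the reflection formula for `Γ`. Hence, for `r > 1` and `t` large,
`β(t) ≤ r cos(πH) / (π t)`.

Inserting this bound in the recursion for `δ_k` and scaling by `t` gives (`deltaK_le_Gk`)
`δ_{k+1}(t,u,v) ≤ (r cos(πH) / π)^(k+1) t⁻¹ G_k(v/t)`, where `G_0(v) = 1/(1+v)` and
`G_{k+1}(v) = ∫ G_k(w)/(1+v+w) dw`. It remains to prove `G_k(0) ≤ π^(k+1) f_{k+1}(0)`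
(`Gk_zero_le`). Let `P` be the standard exponential law, so that `1/(1+x) = ∫ e^{-sx} P(ds)`, and
let `W(s,s') = 1/(s+s')`. Writing every factor of both recursions as such a Laplace transform,
`G_k(0)` becomes the integral of `W(s_0,s_1) ⋯ W(s_{k-1},s_k)` over `P^(k+1)`, the weight of the
path with `k` edges (`Gk_eq`), while `π^(k+1) f_{k+1}(0)` becomes the integral of
`(∫ W(s,s') P(ds'))^k`, the weight of the star with `k` edges (`fk_eq`). The inequality is then
`path_le_star`, valid for every symmetric nonnegative kernel: sliding the edges of the path one by
one to its initial vertex never decreases the weight, by the rearrangement inequality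
`x^a y + y^a x ≤ x^(a+1) + y^(a+1)` applied to the degrees of the two ends of the walk.
-/

open Real MeasureTheory Filter Set intervalIntegral Asymptotics

/-- `b(s,u) = ∫_0^u c(u-v) a(s+v) dv`. -/
noncomputable def bfun (c a : ℝ → ℝ) (s u : ℝ) : ℝ := ∫ v in (0:ℝ)..u, c (u - v) * a (s + v)

/-- The iterated coefficients `b_k(s;T,t)` (with `b_0 := 0` by convention):
`b_1(s;T,t) = b(s,T)` and `b_k(s;T,t) = ∫_0^∞ b(s,u) b_{k-1}(t+u;T,t) du` for `k ≥ 2`. -/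
noncomputable def bk (c a : ℝ → ℝ) (T t : ℝ) : ℕ → ℝ → ℝ
  | 0 => fun _ => 0
  | 1 => fun s => bfun c a s T
  | (k+2) => fun s => ∫ u in Set.Ioi (0:ℝ), bfun c a s u * bk c a T t (k+1) (t + u)

/-- `β(t) = ∫_0^∞ c(v) a(t+v) dv`. -/
noncomputable def betaF (c a : ℝ → ℝ) (t : ℝ) : ℝ := ∫ v in Set.Ioi (0:ℝ), c v * a (t + v)

/-- The iterated kernels `δ_k(t,u,v)` (with `δ_0 := 0` by convention):
`δ_1(t,u,v) = β(t+u+v)` and `δ_k(t,u,v) = ∫_0^∞ β(t+v+w) δ_{k-1}(t,u,w) dw` for `k ≥ 2`. -/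
noncomputable def deltaK (c a : ℝ → ℝ) : ℕ → ℝ → ℝ → ℝ → ℝ
  | 0 => fun _ _ _ => 0
  | 1 => fun t u v => betaF c a (t + u + v)
  | (k+2) => fun t u v => ∫ w in Set.Ioi (0:ℝ), betaF c a (t + v + w) * deltaK c a (k+1) t u w

/-- The functions `f_k` (with `f_0 := 0` by convention):
`f_1(u) = 1/(π(1+u))` and `f_k(u) = ∫_0^∞ f_{k-1}(u+v)/(π(1+v)) dv` for `k ≥ 2`. -/
noncomputable def fk : ℕ → ℝ → ℝ
  | 0 => fun _ => 0
  | 1 => fun u => 1 / (π * (1 + u))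
  | (k+2) => fun u => ∫ v in Set.Ioi (0:ℝ), fk (k+1) (u + v) / (π * (1 + v))

/-- Infinite-past predictor coefficient `ψ(s;T) = b(s,T)`. -/
noncomputable def psiInf (c a : ℝ → ℝ) (T s : ℝ) : ℝ := bfun c a s T

/-- Finite-past predictor coefficient
`ψ(s;T,t) = Σ_{k=1}^∞ (b_{2k-1}(s;T,t) + b_{2k}(t-s;T,t))`. -/
noncomputable def psiFin (c a : ℝ → ℝ) (T t s : ℝ) : ℝ :=
  ∑' k : ℕ, (bk c a T t (2*k+1) s + bk c a T t (2*k+2) (t - s))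


/-! ### Paths and stars for a symmetric kernel -/

/-- `pathFn P W n x` is the total weight of the walks of `n` steps starting at `x`, for the
nonnegative kernel `W` and the reference measure `P`. -/
noncomputable def pathFn {X : Type*} [MeasurableSpace X] (P : Measure X) (W : X → X → ENNReal) :
    ℕ → X → ENNReal
  | 0 => fun _ => 1
  | (n+1) => fun x => ∫⁻ y, W x y * pathFn P W n y ∂P

/-- `iterKer P W n x y` is the total weight of the walks of `n + 1` steps from `x` to `y`. -/
noncomputable def iterKer {X : Type*} [MeasurableSpace X] (P : Measure X) (W : X → X → ENNReal) :
    ℕ → X → X → ENNReal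
  | 0 => W
  | (n+1) => fun x y => ∫⁻ z, W x z * iterKer P W n z y ∂P

section PathStar

variable {X : Type*} [MeasurableSpace X] {P : Measure X} [SFinite P] {W : X → X → ENNReal}

theorem measurable_iterKer (hW : Measurable (Function.uncurry W)) (n : ℕ) :
    Measurable (Function.uncurry (iterKer P W n)) := by
  induction n with
  | zero => exact hW
  | succ n ih =>
    have : Measurable (fun p : (X × X) × X =>
        Function.uncurry W (p.1.1, p.2) * Function.uncurry (iterKer P W n) (p.2, p.1.2)) := by
      fun_prop
    exact Measurable.lintegral_prod_right' this

theorem measurable_pathFn (hW : Measurable (Function.uncurry W)) (n : ℕ) :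
    Measurable (pathFn P W n) := by
  induction n with
  | zero => exact measurable_const
  | succ n ih =>
    have : Measurable (fun p : X × X => Function.uncurry W p * pathFn P W n p.2) := by
      fun_prop
    exact this.lintegral_prod_right'

/-- A walk may be extended by one step at its end instead of at its start. -/
theorem iterKer_succ' (hW : Measurable (Function.uncurry W)) (n : ℕ) (x y : X) :
    iterKer P W (n+1) x y = ∫⁻ z, iterKer P W n x z * W z y ∂P := by
  induction n generalizing x y with
  | zero => rfl
  | succ n ih =>
    have hV := measurable_iterKer (P := P) hW n
    calc iterKer P W (n+2) x y
        = ∫⁻ z, W x z * iterKer P W (n+1) z y ∂P := rfl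
      _ = ∫⁻ z, ∫⁻ w, W x z * (iterKer P W n z w * W w y) ∂P ∂P := by
          refine lintegral_congr fun z => ?_
          rw [ih, lintegral_const_mul]
          have h1 : Measurable (fun w => Function.uncurry (iterKer P W n) (z, w)) := by fun_prop
          have h2 : Measurable (fun w => Function.uncurry W (w, y)) := by fun_prop
          exact h1.mul h2
      _ = ∫⁻ w, ∫⁻ z, W x z * (iterKer P W n z w * W w y) ∂P ∂P := by
          refine lintegral_lintegral_swap ?_
          have h0 : Measurable (fun p : X × X => Function.uncurry W (x, p.1) *
            (Function.uncurry (iterKer P W n) p * Function.uncurry W (p.2, y))) := by fun_prop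
          exact h0.aemeasurable
      _ = ∫⁻ w, iterKer P W (n+1) x w * W w y ∂P := by
          refine lintegral_congr fun w => ?_
          change _ = (∫⁻ z, W x z * iterKer P W n z w ∂P) * W w y
          rw [← lintegral_mul_const]
          · simp only [mul_assoc]
          · have h1 : Measurable (fun z => Function.uncurry (iterKer P W n) (z, w)) := by fun_prop
            have h2 : Measurable (fun z => Function.uncurry W (x, z)) := by fun_prop
            exact h2.mul h1

theorem iterKer_symm (hW : Measurable (Function.uncurry W)) (hs : ∀ x y, W x y = W y x)
    (n : ℕ) (x y : X) : iterKer P W n x y = iterKer P W n y x := by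
  induction n generalizing x y with
  | zero => exact hs x y
  | succ n ih =>
    rw [iterKer_succ' hW]
    refine lintegral_congr fun z => ?_
    rw [ih x z, hs z y, mul_comm]

theorem lintegral_iterKer (hW : Measurable (Function.uncurry W)) (n m : ℕ) (x : X) :
    ∫⁻ y, iterKer P W n x y * pathFn P W m y ∂P = pathFn P W (n+1+m) x := by
  induction n generalizing x with
  | zero => rw [zero_add, add_comm]; rfl
  | succ n ih =>
    have hV := measurable_iterKer (P := P) hW n
    have hQ := measurable_pathFn (P := P) hW m
    have e : n + 1 + 1 + m = (n + 1 + m) + 1 := by ring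
    rw [e]
    calc ∫⁻ y, iterKer P W (n+1) x y * pathFn P W m y ∂P
        = ∫⁻ y, ∫⁻ z, W x z * (iterKer P W n z y * pathFn P W m y) ∂P ∂P := by
          refine lintegral_congr fun y => ?_
          change (∫⁻ z, W x z * iterKer P W n z y ∂P) * _ = _
          rw [← lintegral_mul_const]
          · simp only [mul_assoc]
          · have h1 : Measurable (fun z => Function.uncurry (iterKer P W n) (z, y)) := by fun_prop
            have h2 : Measurable (fun z => Function.uncurry W (x, z)) := by fun_prop
            exact h2.mul h1
      _ = ∫⁻ z, ∫⁻ y, W x z * (iterKer P W n z y * pathFn P W m y) ∂P ∂P := by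
          refine lintegral_lintegral_swap ?_
          have h0 : Measurable (fun p : X × X => Function.uncurry W (x, p.2) *
            (Function.uncurry (iterKer P W n) (p.2, p.1) * pathFn P W m p.1)) := by fun_prop
          exact h0.aemeasurable
      _ = ∫⁻ z, W x z * pathFn P W (n+1+m) z ∂P := by
          refine lintegral_congr fun z => ?_
          rw [← ih, lintegral_const_mul]
          have h1 : Measurable (fun w => Function.uncurry (iterKer P W n) (z, w)) := by fun_prop
          exact h1.mul hQ

theorem ennreal_rearrange (a : ℕ) (x y : ENNReal) :
    x ^ a * y + y ^ a * x ≤ x ^ (a+1) + y ^ (a+1) := by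
  have aux : ∀ x y : ENNReal, x ≤ y → x ^ a * y + y ^ a * x ≤ x ^ (a+1) + y ^ (a+1) := by
    intro x y h
    have h2 : x ^ a ≤ y ^ a := by gcongr
    obtain ⟨z, rfl⟩ := exists_add_of_le h
    calc x ^ a * (x + z) + (x + z) ^ a * x = x ^ (a+1) + (x ^ a * z + (x + z) ^ a * x) := by ring
      _ ≤ x ^ (a+1) + ((x + z) ^ a * z + (x + z) ^ a * x) := by gcongr
      _ = x ^ (a+1) + (x + z) ^ (a+1) := by ring
  rcases le_total x y with h | h
  · exact aux x y h
  · rw [add_comm, add_comm (x ^ (a+1))]; exact aux y x h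

/-- Sliding one step of the walk to its starting vertex increases the weight: symmetrising the
double integral over the two ends of the walk reduces this to the rearrangement inequality
`x ^ a * y + y ^ a * x ≤ x ^ (a + 1) + y ^ (a + 1)`. -/
theorem slide_step (hW : Measurable (Function.uncurry W)) (hs : ∀ x y, W x y = W y x) (a m : ℕ) :
    ∫⁻ x, pathFn P W 1 x ^ a * pathFn P W (m+2) x ∂P ≤
      ∫⁻ x, pathFn P W 1 x ^ (a+1) * pathFn P W (m+1) x ∂P := by
  set d := pathFn P W 1 with hd
  have hdm : Measurable d := measurable_pathFn hW 1
  have hV := measurable_iterKer (P := P) hW m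
  have hVx : ∀ x, Measurable (fun y => iterKer P W m x y) := fun x => by
    have h1 : Measurable (fun w => Function.uncurry (iterKer P W m) (x, w)) := by fun_prop
    exact h1
  have hL : ∫⁻ x, d x ^ a * pathFn P W (m+2) x ∂P =
      ∫⁻ x, ∫⁻ y, d x ^ a * d y * iterKer P W m x y ∂P ∂P := by
    refine lintegral_congr fun x => ?_
    rw [show m + 2 = m + 1 + 1 by ring, ← lintegral_iterKer hW, ← lintegral_const_mul]
    · refine lintegral_congr fun y => ?_
      rw [← hd]; ring
    · exact (hVx x).mul hdm
  have hR : ∫⁻ x, d x ^ (a+1) * pathFn P W (m+1) x ∂P =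
      ∫⁻ x, ∫⁻ y, d x ^ (a+1) * iterKer P W m x y ∂P ∂P := by
    refine lintegral_congr fun x => ?_
    rw [show m + 1 = m + 1 + 0 by ring, ← lintegral_iterKer hW, ← lintegral_const_mul]
    · refine lintegral_congr fun y => ?_
      simp [pathFn]
    · exact (hVx x).mul (measurable_pathFn hW 0)
  have mL : Measurable (fun p : X × X => d p.1 ^ a * d p.2 *
      Function.uncurry (iterKer P W m) p) := by fun_prop
  have mR : Measurable (fun p : X × X => d p.1 ^ (a+1) *
      Function.uncurry (iterKer P W m) p) := by fun_prop
  have mL' : Measurable (fun p : X × X => d p.2 ^ a * d p.1 *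
      Function.uncurry (iterKer P W m) p) := by fun_prop
  have mR' : Measurable (fun p : X × X => d p.2 ^ (a+1) *
      Function.uncurry (iterKer P W m) p) := by fun_prop
  have hL' : ∫⁻ x, d x ^ a * pathFn P W (m+2) x ∂P =
      ∫⁻ x, ∫⁻ y, d y ^ a * d x * iterKer P W m x y ∂P ∂P := by
    rw [hL, lintegral_lintegral_swap mL.aemeasurable]
    refine lintegral_congr fun x => lintegral_congr fun y => ?_
    rw [iterKer_symm hW hs]
  have hR' : ∫⁻ x, d x ^ (a+1) * pathFn P W (m+1) x ∂P =
      ∫⁻ x, ∫⁻ y, d y ^ (a+1) * iterKer P W m x y ∂P ∂P := by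
    rw [hR, lintegral_lintegral_swap mR.aemeasurable]
    refine lintegral_congr fun x => lintegral_congr fun y => ?_
    rw [iterKer_symm hW hs]
  have key : (∫⁻ x, d x ^ a * pathFn P W (m+2) x ∂P) + (∫⁻ x, d x ^ a * pathFn P W (m+2) x ∂P) ≤
      (∫⁻ x, d x ^ (a+1) * pathFn P W (m+1) x ∂P) +
        (∫⁻ x, d x ^ (a+1) * pathFn P W (m+1) x ∂P) := by
    nth_rewrite 1 [hL]
    nth_rewrite 1 [hR]
    rw [hL', hR']
    have m1 : Measurable (fun x => ∫⁻ y, d x ^ a * d y * iterKer P W m x y ∂P) :=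
      mL.lintegral_prod_right'
    have m2 : Measurable (fun x => ∫⁻ y, d x ^ (a+1) * iterKer P W m x y ∂P) :=
      mR.lintegral_prod_right'
    rw [← lintegral_add_left m1, ← lintegral_add_left m2]
    refine lintegral_mono fun x => ?_
    have m3 : Measurable (fun y => d x ^ a * d y * iterKer P W m x y) :=
      (hdm.const_mul _).mul (hVx x)
    have m4 : Measurable (fun y => d x ^ (a+1) * iterKer P W m x y) := (hVx x).const_mul _
    rw [← lintegral_add_left m3, ← lintegral_add_left m4]
    refine lintegral_mono fun y => ?_
    simp only [← add_mul]
    gcongr ?_ * _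
    exact ennreal_rearrange a (d x) (d y)
  by_contra hlt
  push Not at hlt
  exact absurd key (not_le.mpr (ENNReal.add_lt_add hlt hlt))

/-- Among trees with `n` edges, the star carries more weight than the path. -/
theorem path_le_star (hW : Measurable (Function.uncurry W)) (hs : ∀ x y, W x y = W y x) (n : ℕ) :
    ∫⁻ x, pathFn P W n x ∂P ≤ ∫⁻ x, pathFn P W 1 x ^ n ∂P := by
  have h : ∀ n a : ℕ, ∫⁻ x, pathFn P W 1 x ^ a * pathFn P W (n+1) x ∂P ≤
      ∫⁻ x, pathFn P W 1 x ^ (a+n+1) ∂P := by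
    intro n
    induction n with
    | zero => intro a; simp [pow_succ]
    | succ n ih =>
      intro a
      refine (slide_step hW hs a n).trans ((ih (a+1)).trans (le_of_eq ?_))
      rw [show a + 1 + n + 1 = a + (n + 1) + 1 by ring]
  cases n with
  | zero => simp [pathFn]
  | succ n => simpa using h n 0

end PathStar

/-! ### Laplace representation of the two iterated Hilbert-type kernels -/

/-- The function `1 / (1 + x)` with values in `[0, ∞]`. -/
noncomputable def hK (x : ℝ) : ENNReal := ENNReal.ofReal (1 / (1 + x))

/-- The function `exp (-x)` with values in `[0, ∞]`. -/
noncomputable def eK (x : ℝ) : ENNReal := ENNReal.ofReal (Real.exp (-x))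

/-- The standard exponential distribution on `(0, ∞)`. -/
noncomputable def expP : Measure ℝ :=
  (volume.restrict (Set.Ioi (0:ℝ))).withDensity eK

/-- The Hilbert kernel `1 / (s + s')`, written as `∫₀^∞ exp (-w (s + s')) dw`. -/
noncomputable def hilbW (s s' : ℝ) : ENNReal := ∫⁻ w in Set.Ioi (0:ℝ), eK (s * w) * eK (s' * w)

/-- The functions `G_0 (v) = 1 / (1 + v)`, `G_{k+1} (v) = ∫₀^∞ G_k (w) / (1 + v + w) dw`; they
dominate the rescaled `δ_{k+1}`. -/
noncomputable def Gk : ℕ → ℝ → ENNReal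
  | 0 => hK
  | (k+1) => fun v => ∫⁻ w in Set.Ioi (0:ℝ), hK (v + w) * Gk k w

theorem measurable_hK : Measurable hK := by unfold hK; fun_prop

theorem measurable_eK : Measurable eK := by unfold eK; fun_prop

instance : SFinite expP := by unfold expP; infer_instance

theorem eK_add (x y : ℝ) : eK (x + y) = eK x * eK y := by
  unfold eK
  rw [← ENNReal.ofReal_mul (Real.exp_pos _).le, ← Real.exp_add]; congr 2; ring

theorem hilbW_symm (s s' : ℝ) : hilbW s s' = hilbW s' s := by
  unfold hilbW; simp only [mul_comm]

theorem measurable_hilbW : Measurable (Function.uncurry hilbW) := by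
  have hm := measurable_eK
  have : Measurable (fun p : (ℝ × ℝ) × ℝ => eK (p.1.1 * p.2) * eK (p.1.2 * p.2)) := by fun_prop
  exact this.lintegral_prod_right'

theorem lintegral_expP (f : ℝ → ENNReal) :
    ∫⁻ s, f s ∂expP = ∫⁻ s in Set.Ioi (0:ℝ), eK s * f s := by
  unfold expP
  exact lintegral_withDensity_eq_lintegral_mul_non_measurable _ measurable_eK
    (Eventually.of_forall fun x => ENNReal.ofReal_lt_top) f

/-- `1 / (1 + x)` is the Laplace transform of the exponential distribution. -/
theorem hK_eq {x : ℝ} (hx : 0 ≤ x) : hK x = ∫⁻ s, eK (s * x) ∂expP := by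
  rw [lintegral_expP]
  have hpos : 0 < 1 + x := by linarith
  have e : ∀ s : ℝ, eK s * eK (s * x) = ENNReal.ofReal (Real.exp (-(1 + x) * s)) := by
    intro s; rw [← eK_add]; unfold eK; congr 2; ring
  simp only [e]
  rw [← ofReal_integral_eq_lintegral_ofReal]
  · rw [integral_exp_mul_Ioi (by linarith) 0]
    unfold hK; simp
    congr 1
    rw [show -x + -1 = -(1 + x) by ring, neg_div_neg_eq, one_div]
  · exact integrableOn_exp_mul_Ioi (by linarith) 0
  · exact Eventually.of_forall fun s => (Real.exp_pos _).le

theorem measurable_Gk (k : ℕ) : Measurable (Gk k) := by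
  induction k with
  | zero => exact measurable_hK
  | succ k ih =>
    have hm := measurable_hK
    have : Measurable (fun p : ℝ × ℝ => hK (p.1 + p.2) * Gk k p.2) := by fun_prop
    exact this.lintegral_prod_right'

theorem hK_anti {x y : ℝ} (hx : 0 ≤ x) (hxy : x ≤ y) : hK y ≤ hK x := by
  unfold hK
  apply ENNReal.ofReal_le_ofReal
  apply one_div_le_one_div_of_le <;> linarith

theorem Gk_le_zero (k : ℕ) {v : ℝ} (hv : 0 ≤ v) : Gk k v ≤ Gk k 0 := by
  cases k with
  | zero => exact hK_anti le_rfl hv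
  | succ k =>
    refine setLIntegral_mono' measurableSet_Ioi fun w hw => ?_
    have hw' : (0:ℝ) < w := hw
    gcongr
    exact hK_anti (by linarith) (by linarith)

/-- Laplace representation of `Gk`: at `v = 0` it is the path weight for the Hilbert kernel. -/
theorem Gk_eq (k : ℕ) {v : ℝ} (hv : 0 ≤ v) :
    Gk k v = ∫⁻ s, eK (s * v) * pathFn expP hilbW k s ∂expP := by
  have he := measurable_eK
  have hW := measurable_hilbW
  induction k generalizing v with
  | zero => simp only [pathFn, mul_one]; exact hK_eq hv
  | succ k ih =>
    have hQ := measurable_pathFn (P := expP) hW k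
    calc Gk (k+1) v
        = ∫⁻ w in Set.Ioi (0:ℝ), ∫⁻ s, ∫⁻ s',
            eK (s * v) * (eK (s * w) * eK (s' * w) * pathFn expP hilbW k s') ∂expP ∂expP := by
          refine setLIntegral_congr_fun measurableSet_Ioi fun w hw => ?_
          have hw' : (0:ℝ) < w := hw
          change hK (v + w) * Gk k w = _
          rw [hK_eq (by linarith), ih hw'.le, ← lintegral_mul_const _ (by fun_prop)]
          refine lintegral_congr fun s => ?_
          rw [← lintegral_const_mul _ (by fun_prop)]
          refine lintegral_congr fun s' => ?_
          rw [mul_add, eK_add]; ring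
      _ = ∫⁻ s, (∫⁻ w in Set.Ioi (0:ℝ), ∫⁻ s',
            eK (s * v) * (eK (s * w) * eK (s' * w) * pathFn expP hilbW k s') ∂expP) ∂expP := by
          refine lintegral_lintegral_swap (Measurable.aemeasurable ?_)
          have : Measurable (fun p : (ℝ × ℝ) × ℝ => eK (p.1.2 * v) * (eK (p.1.2 * p.1.1) *
            eK (p.2 * p.1.1) * pathFn expP hilbW k p.2)) := by fun_prop
          exact this.lintegral_prod_right'
      _ = ∫⁻ s, eK (s * v) * pathFn expP hilbW (k+1) s ∂expP := by
          refine lintegral_congr fun s => ?_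
          rw [lintegral_lintegral_swap]
          · change _ = _ * ∫⁻ y, hilbW s y * pathFn expP hilbW k y ∂expP
            have hWs : Measurable (fun y => hilbW s y) := by
              have h1 : Measurable (fun w => Function.uncurry hilbW (s, w)) := by fun_prop
              exact h1
            rw [← lintegral_const_mul _ (by fun_prop)]
            refine lintegral_congr fun s' => ?_
            rw [lintegral_const_mul _ (by fun_prop), lintegral_mul_const _ (by fun_prop)]
            rfl
          · refine Measurable.aemeasurable ?_
            have : Measurable (fun p : ℝ × ℝ => eK (s * v) * (eK (s * p.1) *
              eK (p.2 * p.1) * pathFn expP hilbW k p.2)) := by fun_prop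
            exact this

/-- The degree of `s` for the Hilbert kernel, in the form in which it enters the recursion for `fk`. -/
theorem degree_eq (s : ℝ) :
    pathFn expP hilbW 1 s = ∫⁻ v in Set.Ioi (0:ℝ), eK (s * v) * hK v := by
  have he := measurable_eK
  simp only [pathFn, mul_one]
  unfold hilbW
  rw [lintegral_lintegral_swap]
  · refine setLIntegral_congr_fun measurableSet_Ioi fun w hw => ?_
    have hw' : (0:ℝ) < w := hw
    rw [hK_eq hw'.le, lintegral_const_mul _ (by fun_prop)]
  · refine Measurable.aemeasurable ?_
    have : Measurable (fun p : ℝ × ℝ => eK (s * p.2) * eK (p.1 * p.2)) := by fun_prop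
    exact this

theorem measurable_fk (k : ℕ) : Measurable (fk k) := by
  induction k with
  | zero => exact measurable_const
  | succ k ih =>
    cases k with
    | zero => change Measurable fun u : ℝ => 1 / (π * (1 + u)); fun_prop
    | succ k =>
      have : Measurable (fun p : ℝ × ℝ => fk (k+1) (p.1 + p.2) / (π * (1 + p.2))) := by fun_prop
      exact (this.stronglyMeasurable.integral_prod_right'
        (ν := volume.restrict (Set.Ioi (0:ℝ)))).measurable

theorem integrableOn_one_add_rpow {q : ℝ} (hq : q < -1) :
    IntegrableOn (fun v : ℝ => (1 + v) ^ q) (Set.Ioi 0) := by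
  have h := integrableOn_add_rpow_Ioi_of_lt (m := 1) (c := 0) hq (by norm_num)
  simpa only [add_comm] using h

theorem fk_integrable_of_bound {k : ℕ} {C p : ℝ} (hp : 0 < p)
    (hb : ∀ u : ℝ, 0 ≤ u → 0 ≤ fk (k+1) u ∧ fk (k+1) u ≤ C * (1 + u) ^ (-p))
    {u : ℝ} (hu : 0 ≤ u) :
    IntegrableOn (fun v => fk (k+1) (u + v) / (π * (1 + v))) (Set.Ioi 0) ∧
    0 ≤ fk (k+2) u ∧ fk (k+2) u ≤
      (C / π * ∫ v in Set.Ioi (0:ℝ), (1 + v) ^ (-(p/2) - 1)) * (1 + u) ^ (-(p/2)) := by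
  have hm := measurable_fk (k+1)
  have hI := integrableOn_one_add_rpow (q := -(p/2) - 1) (by linarith)
  have hC : 0 ≤ C := by simpa using (hb 0 le_rfl).1.trans (hb 0 le_rfl).2
  have hpt : ∀ v ∈ Set.Ioi (0:ℝ), fk (k+1) (u + v) / (π * (1 + v)) ≤
      C / π * (1 + u) ^ (-(p/2)) * (1 + v) ^ (-(p/2) - 1) := by
    intro v hv
    have hv' : (0:ℝ) < v := hv
    have h1 : (0:ℝ) < 1 + u := by linarith
    have h2 : (0:ℝ) < 1 + v := by linarith
    rw [div_le_iff₀ (by positivity), rpow_sub_one h2.ne']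
    have e : C / π * (1 + u) ^ (-(p / 2)) * ((1 + v) ^ (-(p / 2)) / (1 + v)) * (π * (1 + v)) =
      C * ((1 + u) ^ (-(p / 2)) * (1 + v) ^ (-(p / 2))) := by
      field_simp
    rw [e]
    refine (hb (u+v) (by linarith)).2.trans ?_
    refine mul_le_mul_of_nonneg_left ?_ hC
    rw [show -p = -(p/2) + -(p/2) by ring, rpow_add (by linarith)]
    have h3 : (1 + (u + v)) ^ (-(p/2)) ≤ (1 + u) ^ (-(p/2)) :=
      Real.rpow_le_rpow_of_nonpos h1 (by linarith) (by linarith)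
    have h4 : (1 + (u + v)) ^ (-(p/2)) ≤ (1 + v) ^ (-(p/2)) :=
      Real.rpow_le_rpow_of_nonpos h2 (by linarith) (by linarith)
    exact mul_le_mul h3 h4 (by positivity) (by positivity)
  have hnn : ∀ v ∈ Set.Ioi (0:ℝ), 0 ≤ fk (k+1) (u + v) / (π * (1 + v)) := by
    intro v hv
    have hv' : (0:ℝ) < v := hv
    have := (hb (u+v) (by linarith)).1
    positivity
  have hInt : IntegrableOn (fun v => fk (k+1) (u + v) / (π * (1 + v))) (Set.Ioi 0) := by
    refine Integrable.mono' (hI.const_mul (C / π * (1 + u) ^ (-(p/2)))) ?_ ?_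
    · exact Measurable.aestronglyMeasurable (by fun_prop)
    · refine (ae_restrict_iff' measurableSet_Ioi).2 (Eventually.of_forall fun v hv => ?_)
      rw [Real.norm_of_nonneg (hnn v hv)]
      exact hpt v hv
  refine ⟨hInt, setIntegral_nonneg measurableSet_Ioi hnn, ?_⟩
  calc fk (k+2) u = ∫ v in Set.Ioi (0:ℝ), fk (k+1) (u + v) / (π * (1 + v)) := rfl
    _ ≤ ∫ v in Set.Ioi (0:ℝ), C / π * (1 + u) ^ (-(p/2)) * (1 + v) ^ (-(p/2) - 1) :=
        setIntegral_mono_on hInt (hI.const_mul _) measurableSet_Ioi hpt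
    _ = _ := by rw [MeasureTheory.integral_const_mul]; ring

/-- Power decay of `fk`, which makes the integral in its recursion genuinely convergent. -/
theorem fk_bound (k : ℕ) : ∃ C p : ℝ, 0 < p ∧
    ∀ u : ℝ, 0 ≤ u → 0 ≤ fk (k+1) u ∧ fk (k+1) u ≤ C * (1 + u) ^ (-p) := by
  induction k with
  | zero =>
    refine ⟨1/π, 1, one_pos, fun u hu => ?_⟩
    change 0 ≤ 1 / (π * (1 + u)) ∧ 1 / (π * (1 + u)) ≤ _
    refine ⟨by positivity, le_of_eq ?_⟩
    rw [rpow_neg_one]; field_simp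
  | succ k ih =>
    obtain ⟨C, p, hp, hb⟩ := ih
    exact ⟨_, p/2, by linarith, fun u hu => (fk_integrable_of_bound hp hb hu).2⟩

/-- Laplace representation of `π ^ (k + 1) * fk (k + 1)`: at `u = 0` it is the star weight for the
Hilbert kernel. -/
theorem fk_eq (k : ℕ) {u : ℝ} (hu : 0 ≤ u) :
    ENNReal.ofReal (π ^ (k+1) * fk (k+1) u) =
      ∫⁻ s, eK (s * u) * pathFn expP hilbW 1 s ^ k ∂expP := by
  have he := measurable_eK
  have hh := measurable_hK
  have hd := measurable_pathFn (P := expP) measurable_hilbW 1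
  induction k generalizing u with
  | zero =>
    simp only [pow_zero, mul_one]
    rw [← hK_eq hu]
    unfold hK
    congr 1
    change π ^ 1 * (1 / (π * (1 + u))) = _
    field_simp
  | succ k ih =>
    obtain ⟨C, p, hp, hb⟩ := fk_bound k
    have hInt := (fk_integrable_of_bound hp hb hu).1
    have hL : ENNReal.ofReal (π ^ (k+1+1) * fk (k+1+1) u) =
        ∫⁻ v in Set.Ioi (0:ℝ), ENNReal.ofReal (π ^ (k+1) * fk (k+1) (u + v)) * hK v := by
      change ENNReal.ofReal (π ^ (k+2) * ∫ v in Set.Ioi (0:ℝ), _) = _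
      rw [← MeasureTheory.integral_const_mul, ofReal_integral_eq_lintegral_ofReal (hInt.const_mul _)]
      · refine setLIntegral_congr_fun measurableSet_Ioi fun v hv => ?_
        have hv' : (0:ℝ) < v := hv
        have := (hb (u+v) (by linarith)).1
        unfold hK
        rw [← ENNReal.ofReal_mul (by positivity)]
        congr 1
        field_simp
        ring
      · refine (ae_restrict_iff' measurableSet_Ioi).2 (Eventually.of_forall fun v hv => ?_)
        have hv' : (0:ℝ) < v := hv
        have := (hb (u+v) (by linarith)).1
        simp only [Pi.zero_apply]
        positivity
    rw [hL]
    calc ∫⁻ v in Set.Ioi (0:ℝ), ENNReal.ofReal (π ^ (k+1) * fk (k+1) (u + v)) * hK v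
        = ∫⁻ v in Set.Ioi (0:ℝ), ∫⁻ s, (eK (s * u) * pathFn expP hilbW 1 s ^ k) *
            (eK (s * v) * hK v) ∂expP := by
          refine setLIntegral_congr_fun measurableSet_Ioi fun v hv => ?_
          have hv' : (0:ℝ) < v := hv
          rw [ih (by linarith), ← lintegral_mul_const _ (by fun_prop)]
          refine lintegral_congr fun s => ?_
          rw [mul_add, eK_add]; ring
      _ = ∫⁻ s, (∫⁻ v in Set.Ioi (0:ℝ), (eK (s * u) * pathFn expP hilbW 1 s ^ k) *
            (eK (s * v) * hK v)) ∂expP := by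
          refine lintegral_lintegral_swap (Measurable.aemeasurable ?_)
          have : Measurable (fun p : ℝ × ℝ => (eK (p.2 * u) * pathFn expP hilbW 1 p.2 ^ k) *
            (eK (p.2 * p.1) * hK p.1)) := by fun_prop
          exact this
      _ = _ := by
          refine lintegral_congr fun s => ?_
          rw [lintegral_const_mul _ (by fun_prop), ← degree_eq, pow_succ]; ring

/-- The path weight `Gk k 0` is at most the star weight `π ^ (k + 1) * fk (k + 1) 0`. -/
theorem Gk_zero_le (k : ℕ) : Gk k 0 ≤ ENNReal.ofReal (π ^ (k+1) * fk (k+1) 0) := by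
  rw [Gk_eq k le_rfl, fk_eq k le_rfl]
  simpa [eK] using path_le_star measurable_hilbW hilbW_symm k

/-! ### Comparison of the iterated kernels with `Gk` -/

theorem lintegral_Ioi_scale {t : ℝ} (ht : 0 < t) {F : ℝ → ENNReal} (hF : Measurable F) :
    ∫⁻ w in Set.Ioi (0:ℝ), F (w / t) = ENNReal.ofReal t * ∫⁻ w in Set.Ioi (0:ℝ), F w := by
  have h : ∫⁻ w, (Set.Ioi (0:ℝ)).indicator F w =
      ENNReal.ofReal |t⁻¹| * ∫⁻ w, (Set.Ioi (0:ℝ)).indicator F (t⁻¹ * w) := by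
    conv_lhs => rw [← Real.smul_map_volume_mul_left (a := t⁻¹) (by positivity)]
    rw [lintegral_smul_measure, lintegral_map (hF.indicator measurableSet_Ioi) (by fun_prop)]
    rfl
  rw [← lintegral_indicator measurableSet_Ioi, ← lintegral_indicator measurableSet_Ioi, h,
    ← mul_assoc, ← ENNReal.ofReal_mul ht.le, abs_of_pos (by positivity),
    mul_inv_cancel₀ ht.ne', ENNReal.ofReal_one, one_mul]
  refine lintegral_congr fun w => ?_
  have : t⁻¹ * w ∈ Set.Ioi (0:ℝ) ↔ w ∈ Set.Ioi (0:ℝ) := by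
    simp only [Set.mem_Ioi]
    constructor
    · intro h; exact (pos_iff_pos_of_mul_pos h).1 (by positivity)
    · intro h; positivity
  simp only [Set.indicator, this, div_eq_inv_mul]

theorem setIntegral_Ioi_pos {f : ℝ → ℝ} (hf : ∀ w ∈ Set.Ioi (0:ℝ), 0 < f w)
    (hi : IntegrableOn f (Set.Ioi 0)) : 0 < ∫ w in Set.Ioi (0:ℝ), f w := by
  rw [setIntegral_pos_iff_support_of_nonneg_ae
    ((ae_restrict_iff' measurableSet_Ioi).2 (Eventually.of_forall fun w hw => (hf w hw).le)) hi]
  have : Function.support f ∩ Set.Ioi 0 = Set.Ioi 0 :=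
    Set.inter_eq_right.2 fun w hw => (hf w hw).ne'
  rw [this]; simp

/-- If `β(t) ≤ A / t` for `t ≥ N`, scaling all integration variables by `t` bounds `δ_{k+1}(t, u, v)`
by `A ^ (k + 1) / t * Gk k (v / t)`. Monotonicity in `v` is carried along because it supplies the
measurability of `δ_{k+1}(t, u, ·)`. -/
theorem deltaK_le_Gk {c a : ℝ → ℝ} {N A : ℝ} (hN : 0 < N) (hA : 0 ≤ A)
    (hpos : ∀ t, N ≤ t → 0 < betaF c a t) (hanti : AntitoneOn (betaF c a) (Set.Ici N))
    (hb : ∀ t, N ≤ t → betaF c a t ≤ A / t) {t u : ℝ} (ht : N ≤ t) (hu : 0 < u) (k : ℕ) :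
    (∀ v : ℝ, 0 < v → 0 < deltaK c a (k+1) t u v ∧
      ENNReal.ofReal (deltaK c a (k+1) t u v) ≤ ENNReal.ofReal (A ^ (k+1) / t) * Gk k (v / t)) ∧
    AntitoneOn (deltaK c a (k+1) t u) (Set.Ioi 0) := by
  have ht0 : 0 < t := hN.trans_le ht
  have hh := measurable_hK
  induction k with
  | zero =>
    refine ⟨fun v hv => ⟨hpos _ (by linarith), ?_⟩, fun v hv w hw hvw => ?_⟩
    · change ENNReal.ofReal (betaF c a (t + u + v)) ≤ _ * hK (v / t)
      unfold hK
      rw [← ENNReal.ofReal_mul (by positivity)]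
      refine ENNReal.ofReal_le_ofReal ((hb _ (by linarith)).trans ?_)
      rw [show A ^ (0+1) / t * (1 / (1 + v / t)) = A / (t + v) by rw [zero_add, pow_one]; field_simp]
      exact div_le_div_of_nonneg_left hA (by linarith) (by linarith)
    · have hv' : 0 < v := hv
      have hw' : 0 < w := hw
      exact hanti (show N ≤ _ by linarith) (show N ≤ _ by linarith) (by linarith)
  | succ k ih =>
    obtain ⟨ih1, ih2⟩ := ih
    have hG := measurable_Gk k
    have hppos : ∀ v : ℝ, 0 < v → ∀ w ∈ Set.Ioi (0:ℝ),
        0 < betaF c a (t + v + w) * deltaK c a (k+1) t u w := by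
      intro v hv w hw
      have hw' : (0:ℝ) < w := hw
      exact mul_pos (hpos _ (by linarith)) (ih1 w hw).1
    have hlin : ∀ v : ℝ, 0 < v →
        ∫⁻ w in Set.Ioi (0:ℝ), ENNReal.ofReal (betaF c a (t + v + w) * deltaK c a (k+1) t u w) ≤
          ENNReal.ofReal (A ^ (k+1+1) / t) * Gk (k+1) (v / t) := by
      intro v hv
      calc ∫⁻ w in Set.Ioi (0:ℝ),
            ENNReal.ofReal (betaF c a (t + v + w) * deltaK c a (k+1) t u w)
          ≤ ∫⁻ w in Set.Ioi (0:ℝ), ENNReal.ofReal (A / t * (A ^ (k+1) / t)) *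
              (hK (v / t + w / t) * Gk k (w / t)) := by
            refine setLIntegral_mono' measurableSet_Ioi fun w hw => ?_
            have hw' : (0:ℝ) < w := hw
            rw [ENNReal.ofReal_mul (hpos _ (by linarith)).le,
              ENNReal.ofReal_mul (by positivity)]
            calc _ ≤ (ENNReal.ofReal (A / t) * hK (v / t + w / t)) *
                  (ENNReal.ofReal (A ^ (k+1) / t) * Gk k (w / t)) := by
                  refine mul_le_mul' ?_ (ih1 w hw).2
                  unfold hK
                  rw [← ENNReal.ofReal_mul (by positivity)]
                  refine ENNReal.ofReal_le_ofReal ((hb _ (by linarith)).trans (le_of_eq ?_))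
                  field_simp
                  ring
              _ = _ := by ring
        _ = ENNReal.ofReal (A / t * (A ^ (k+1) / t)) * (ENNReal.ofReal t * Gk (k+1) (v / t)) := by
            rw [lintegral_const_mul _ (by fun_prop),
              lintegral_Ioi_scale ht0 (F := fun w => hK (v / t + w) * Gk k w) (by fun_prop)]
            rfl
        _ = _ := by
            rw [← mul_assoc, ← ENNReal.ofReal_mul (by positivity)]
            congr 2
            field_simp
            ring
    have hfin : ∀ v : ℝ, 0 < v → Gk (k+1) (v / t) < ⊤ := fun v hv =>
      ((Gk_le_zero (k+1) (by positivity)).trans (Gk_zero_le (k+1))).trans_lt ENNReal.ofReal_lt_top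
    have hnn : ∀ v : ℝ, 0 < v → 0 ≤ᵐ[volume.restrict (Set.Ioi (0:ℝ))]
        fun w => betaF c a (t + v + w) * deltaK c a (k+1) t u w := fun v hv =>
      (ae_restrict_iff' measurableSet_Ioi).2
        (Eventually.of_forall fun w hw => (hppos v hv w hw).le)
    have hInt : ∀ v : ℝ, 0 < v →
        IntegrableOn (fun w => betaF c a (t + v + w) * deltaK c a (k+1) t u w) (Set.Ioi 0) := by
      intro v hv
      refine ⟨?_, ?_⟩
      · have h1 : AntitoneOn (fun w => betaF c a (t + v + w)) (Set.Ioi 0) := by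
          intro x hx y hy hxy
          have hx' : 0 < x := hx
          have hy' : 0 < y := hy
          exact hanti (show N ≤ _ by linarith) (show N ≤ _ by linarith) (by linarith)
        exact ((aemeasurable_restrict_of_antitoneOn measurableSet_Ioi h1).mul
          (aemeasurable_restrict_of_antitoneOn measurableSet_Ioi ih2)).aestronglyMeasurable
      · rw [hasFiniteIntegral_iff_ofReal (hnn v hv)]
        exact (hlin v hv).trans_lt (ENNReal.mul_lt_top ENNReal.ofReal_lt_top (hfin v hv))
    refine ⟨fun v hv => ⟨setIntegral_Ioi_pos (hppos v hv) (hInt v hv), ?_⟩, ?_⟩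
    · change ENNReal.ofReal (∫ w in Set.Ioi (0:ℝ), _) ≤ _
      rw [ofReal_integral_eq_lintegral_ofReal (hInt v hv) (hnn v hv)]
      exact hlin v hv
    · intro v hv v' hv' hvv
      have h1 : 0 < v := hv
      have h2 : 0 < v' := hv'
      refine setIntegral_mono_on (hInt v' hv') (hInt v hv) measurableSet_Ioi fun w hw => ?_
      have hw' : (0:ℝ) < w := hw
      refine mul_le_mul_of_nonneg_right ?_ (ih1 w hw).1.le
      exact hanti (show N ≤ _ by linarith) (show N ≤ _ by linarith) (by linarith)

/-- The bound on `δ_{k+1}` in terms of `fk (k + 1) 0`, from a bound `β(t) ≤ B / (π t)` near infinity. -/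
theorem deltaK_bound {c a : ℝ → ℝ} {N B : ℝ} (hN : 0 < N) (hB : 0 ≤ B)
    (hpos : ∀ t, N ≤ t → 0 < betaF c a t) (hanti : AntitoneOn (betaF c a) (Set.Ici N))
    (hb : ∀ t, N ≤ t → betaF c a t ≤ B / π / t) {t u v : ℝ} (ht : N ≤ t) (hu : 0 < u)
    (hv : 0 < v) (k : ℕ) :
    0 < deltaK c a (k+1) t u v ∧ deltaK c a (k+1) t u v ≤ fk (k+1) 0 * B ^ (k+1) * t⁻¹ := by
  have ht0 : 0 < t := hN.trans_le ht
  obtain ⟨h1, h2⟩ := (deltaK_le_Gk hN (by positivity) hpos hanti hb ht hu k).1 v hv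
  refine ⟨h1, ?_⟩
  obtain ⟨C, p, -, hfk⟩ := fk_bound k
  have hf0 := (hfk 0 le_rfl).1
  have h3 := h2.trans (mul_le_mul' le_rfl ((Gk_le_zero k (v := v / t) (by positivity)).trans
    (Gk_zero_le k)))
  rw [← ENNReal.ofReal_mul (by positivity)] at h3
  refine ((ENNReal.ofReal_le_ofReal_iff (by positivity)).1 h3).trans (le_of_eq ?_)
  rw [div_pow]
  field_simp

/-! ### Asymptotics of `betaF` -/

/-- Lower polynomial control from a doubling inequality. -/
theorem le_of_doubling_lower {f : ℝ → ℝ} {N : ℝ} (hN : 0 < N) (hpos : ∀ t, N ≤ t → 0 < f t)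
    (hanti : AntitoneOn f (Set.Ici N)) {b : ℝ} (hb : 0 ≤ b)
    (hd : ∀ t, N ≤ t → f t ≤ 2 ^ b * f (2 * t)) {x y : ℝ} (hx : N ≤ x) (hxy : x ≤ y) :
    f x ≤ 2 ^ b * (y / x) ^ b * f y := by
  have key : ∀ n : ℕ, ∀ x y : ℝ, N ≤ x → x ≤ y → y ≤ 2 ^ n * x →
      f x ≤ 2 ^ b * (y / x) ^ b * f y := by
    intro n
    induction n with
    | zero =>
      intro x y hx hxy hy
      have : y = x := le_antisymm (by simpa using hy) hxy
      subst this
      have h0 : 0 < y := hN.trans_le hx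
      rw [div_self h0.ne', one_rpow, mul_one]
      exact le_mul_of_one_le_left (hpos _ hx).le (one_le_rpow one_le_two hb)
    | succ n ih =>
      intro x y hx hxy hy
      have hx0 : 0 < x := hN.trans_le hx
      rcases le_total (2 * x) y with h | h
      · have h1 := ih (2 * x) y (by linarith) h (by rw [pow_succ] at hy; linarith)
        calc f x ≤ 2 ^ b * f (2 * x) := hd x hx
          _ ≤ 2 ^ b * (2 ^ b * (y / (2 * x)) ^ b * f y) := by gcongr
          _ = 2 ^ b * (2 * (y / (2 * x))) ^ b * f y := by
            rw [mul_rpow (by norm_num) (by have : 0 < y := by linarith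
                                           positivity)]
            ring
          _ = _ := by rw [show 2 * (y / (2 * x)) = y / x by field_simp]
      · have h1 : f (2 * x) ≤ f y := hanti (show N ≤ y by linarith) (show N ≤ 2 * x by linarith) h
        have h2 : 1 ≤ (y / x) ^ b := one_le_rpow ((one_le_div hx0).2 hxy) hb
        calc f x ≤ 2 ^ b * f (2 * x) := hd x hx
          _ ≤ 2 ^ b * f y := by gcongr
          _ ≤ 2 ^ b * (y / x) ^ b * f y := by
            refine mul_le_mul_of_nonneg_right ?_ (hpos y (by linarith)).le
            exact le_mul_of_one_le_right (by positivity) h2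
  have hx0 : 0 < x := hN.trans_le hx
  obtain ⟨n, hn⟩ := pow_unbounded_of_one_lt (y / x) one_lt_two
  exact key n x y hx hxy ((div_le_iff₀ hx0).1 hn.le)

/-- Upper polynomial control from a doubling inequality. -/
theorem le_of_doubling_upper {f : ℝ → ℝ} {N : ℝ} (hN : 0 < N) (hpos : ∀ t, N ≤ t → 0 < f t)
    (hanti : AntitoneOn f (Set.Ici N)) {b : ℝ} (hb : 0 ≤ b)
    (hd : ∀ t, N ≤ t → 2 ^ b * f (2 * t) ≤ f t) {x y : ℝ} (hx : N ≤ x) (hxy : x ≤ y) :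
    (y / x) ^ b * f y ≤ 2 ^ b * f x := by
  have key : ∀ n : ℕ, ∀ x y : ℝ, N ≤ x → x ≤ y → y ≤ 2 ^ n * x →
      (y / x) ^ b * f y ≤ 2 ^ b * f x := by
    intro n
    induction n with
    | zero =>
      intro x y hx hxy hy
      have : y = x := le_antisymm (by simpa using hy) hxy
      subst this
      have h0 : 0 < y := hN.trans_le hx
      rw [div_self h0.ne', one_rpow, one_mul]
      exact le_mul_of_one_le_left (hpos _ hx).le (one_le_rpow one_le_two hb)
    | succ n ih =>
      intro x y hx hxy hy
      have hx0 : 0 < x := hN.trans_le hx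
      have hy0 : 0 < y := by linarith
      rcases le_total (2 * x) y with h | h
      · have h1 := ih (2 * x) y (by linarith) h (by rw [pow_succ] at hy; linarith)
        calc (y / x) ^ b * f y = (2 * (y / (2 * x))) ^ b * f y := by
              rw [show 2 * (y / (2 * x)) = y / x by field_simp]
          _ = 2 ^ b * ((y / (2 * x)) ^ b * f y) := by
            rw [mul_rpow (by norm_num) (by positivity)]
            ring
          _ ≤ 2 ^ b * (2 ^ b * f (2 * x)) := by gcongr
          _ ≤ 2 ^ b * f x := by
            refine mul_le_mul_of_nonneg_left (hd x hx) (by positivity)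
      · have h1 : f y ≤ f x := hanti (show N ≤ x by linarith) (show N ≤ y by linarith) hxy
        have h2 : (y / x) ^ b ≤ 2 ^ b :=
          rpow_le_rpow (by positivity) ((div_le_iff₀ hx0).2 h) hb
        exact mul_le_mul h2 h1 (hpos y (by linarith)).le (by positivity)
  have hx0 : 0 < x := hN.trans_le hx
  obtain ⟨n, hn⟩ := pow_unbounded_of_one_lt (y / x) one_lt_two
  exact key n x y hx hxy ((div_le_iff₀ hx0).1 hn.le)

/-- Uniform control of `c (t s) / c t` for `s ≤ 1`: near the origin by the growth of `c` at `0`,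
further away by the doubling inequality. -/
theorem c_uniform {c : ℝ → ℝ} (hcpos : ∀ t, 0 < t → 0 < c t) (hcanti : AntitoneOn c (Set.Ioi 0))
    (hc_zero : ∃ q : ℝ, -(1/2 : ℝ) < q ∧ c =O[nhdsWithin 0 (Set.Ioi 0)] fun t : ℝ => t ^ q)
    {N : ℝ} (hN : 0 < N) (hd : ∀ t, N ≤ t → c t ≤ 2 ^ (1/2 : ℝ) * c (2 * t)) :
    ∃ C : ℝ, 0 < C ∧ ∀ t, N ≤ t → ∀ x, 0 < x → x ≤ t → c x ≤ C * (t / x) ^ (1/2 : ℝ) * c t := by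
  have hlow := fun {x y : ℝ} (hx : N ≤ x) (hxy : x ≤ y) =>
    le_of_doubling_lower hN (fun t ht => hcpos t (hN.trans_le ht))
      (hcanti.mono fun t (ht : N ≤ t) => hN.trans_le ht) (b := 1/2) (by norm_num) hd hx hxy
  obtain ⟨q, hq, hO⟩ := hc_zero
  obtain ⟨C0, hC0⟩ := hO.bound
  rw [eventually_nhdsWithin_iff, Metric.eventually_nhds_iff] at hC0
  obtain ⟨ε, hε, hC0⟩ := hC0
  set δ := min (ε/2) 1 with hδ
  have hδ0 : 0 < δ := by positivity
  have hδ1 : δ ≤ 1 := min_le_right _ _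
  have hδε : δ < ε := (min_le_left _ _).trans_lt (by linarith)
  have hsmall : ∀ x, 0 < x → x ≤ δ → c x ≤ |C0| * x ^ (-(1/2) : ℝ) := by
    intro x hx hxδ
    have h1 := hC0 (y := x) (by simp [abs_of_pos hx]; linarith) hx
    rw [Real.norm_of_nonneg (hcpos x hx).le, Real.norm_of_nonneg (by positivity)] at h1
    refine h1.trans ?_
    have h2 : x ^ q ≤ x ^ (-(1/2) : ℝ) :=
      rpow_le_rpow_of_exponent_ge hx (by linarith) hq.le
    exact mul_le_mul (le_abs_self _) h2 (by positivity) (by positivity)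
  obtain ⟨C1, hC1, hmid⟩ : ∃ C1 : ℝ, 0 < C1 ∧ ∀ x, 0 < x → x ≤ N → c x ≤ C1 * x ^ (-(1/2) : ℝ) := by
    refine ⟨|C0| + c δ * N ^ (1/2 : ℝ), ?_, fun x hx hxN => ?_⟩
    · have := hcpos δ hδ0; positivity
    · have := hcpos δ hδ0
      rcases le_total x δ with h | h
      · refine (hsmall x hx h).trans ?_
        gcongr
        linarith [show 0 ≤ c δ * N ^ (1/2 : ℝ) by positivity]
      · have h1 : c x ≤ c δ := hcanti hδ0 hx h
        have h2 : 1 ≤ N ^ (1/2 : ℝ) * x ^ (-(1/2) : ℝ) := by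
          rw [rpow_neg hx.le, ← div_eq_mul_inv, one_le_div (by positivity)]
          gcongr
        calc c x ≤ c δ * 1 := by linarith
          _ ≤ c δ * (N ^ (1/2 : ℝ) * x ^ (-(1/2) : ℝ)) := by gcongr
          _ ≤ (|C0| + c δ * N ^ (1/2 : ℝ)) * x ^ (-(1/2) : ℝ) := by
            have : 0 ≤ |C0| * x ^ (-(1/2) : ℝ) := by positivity
            nlinarith
  have hcN := hcpos N hN
  refine ⟨2 ^ (1/2 : ℝ) + C1 / c N * (2 ^ (1/2 : ℝ) * N ^ (-(1/2) : ℝ)), by positivity, ?_⟩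
  intro t ht x hx hxt
  have ht0 : 0 < t := hN.trans_le ht
  have hct := hcpos t ht0
  have hS : 0 < (t / x) ^ (1/2 : ℝ) * c t := by positivity
  rcases le_total N x with h | h
  · refine (hlow h hxt).trans ?_
    have : 0 ≤ C1 / c N * (2 ^ (1/2 : ℝ) * N ^ (-(1/2) : ℝ)) := by positivity
    rw [mul_assoc, mul_assoc]
    exact mul_le_mul_of_nonneg_right (by linarith) hS.le
  · calc c x ≤ C1 * x ^ (-(1/2) : ℝ) := hmid x hx h
      _ = C1 / c N * x ^ (-(1/2) : ℝ) * c N := by field_simp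
      _ ≤ C1 / c N * x ^ (-(1/2) : ℝ) * (2 ^ (1/2 : ℝ) * (t / N) ^ (1/2 : ℝ) * c t) := by
        gcongr
        exact hlow le_rfl ht
      _ = C1 / c N * (2 ^ (1/2 : ℝ) * N ^ (-(1/2) : ℝ)) * ((t / x) ^ (1/2 : ℝ) * c t) := by
        rw [div_rpow ht0.le hN.le, div_rpow ht0.le hx.le, rpow_neg hx.le, rpow_neg hN.le]
        ring
      _ ≤ _ := by
        rw [mul_assoc (_ + _)]
        refine mul_le_mul_of_nonneg_right ?_ hS.le
        linarith [show (0:ℝ) ≤ 2 ^ (1/2 : ℝ) by positivity]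

/-- Regularly varying functions: `f (t λ) / f t → λ ^ α`. -/
theorem regvar {f L : ℝ → ℝ} {K α : ℝ} (hK : 0 < K) (hL : ∀ᶠ t in atTop, 0 < L t)
    (hslow : ∀ lam : ℝ, 0 < lam → Tendsto (fun t : ℝ => L (t * lam) / L t) atTop (nhds 1))
    (hf : Tendsto (fun t : ℝ => f t / (K * t ^ α * L t)) atTop (nhds 1))
    {lam : ℝ} (hlam : 0 < lam) :
    Tendsto (fun t : ℝ => f (t * lam) / f t) atTop (nhds (lam ^ α)) := by
  have hsc : Tendsto (fun t : ℝ => t * lam) atTop atTop := tendsto_id.atTop_mul_const hlam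
  have h := (((hf.comp hsc).div hf one_ne_zero).mul (hslow lam hlam)).const_mul (lam ^ α)
  rw [div_one, mul_one, mul_one] at h
  refine h.congr' ?_
  filter_upwards [hL, hsc.eventually hL, eventually_gt_atTop 0, hf.eventually_ne one_ne_zero]
    with t h1 h2 h3 h4
  have h5 : f t ≠ 0 := fun h => h4 (by simp [h])
  simp only [Pi.div_apply, Function.comp]
  rw [mul_rpow h3.le hlam.le]
  have : 0 < t ^ α := by positivity
  have : 0 < lam ^ α := by positivity
  field_simp

/-- `t β(t)` converges, by dominated convergence after the substitution `v = t s`: the integrand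
is dominated by a multiple of `s ^ (-1/2)` for `s ≤ 1` and of `s ^ (-3/2)` for `s > 1`, thanks to
the doubling inequalities for `c` and `a`. -/
theorem beta_asymp {c a : ℝ → ℝ} {N0 α₁ α₂ K : ℝ} (hcpos : ∀ t, 0 < t → 0 < c t)
    (hcanti : AntitoneOn c (Set.Ioi 0))
    (hc_zero : ∃ q : ℝ, -(1/2 : ℝ) < q ∧ c =O[nhdsWithin 0 (Set.Ioi 0)] fun t : ℝ => t ^ q)
    (hN0 : 0 < N0) (hapos : ∀ t, N0 ≤ t → 0 < a t) (haanti : AntitoneOn a (Set.Ici N0))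
    (hα₁ : -(1/2) < α₁) (hα₂ : α₂ < -(3/2))
    (rc : ∀ lam : ℝ, 0 < lam → Tendsto (fun t => c (t * lam) / c t) atTop (nhds (lam ^ α₁)))
    (ra : ∀ lam : ℝ, 0 < lam → Tendsto (fun t => a (t * lam) / a t) atTop (nhds (lam ^ α₂)))
    (hprod : Tendsto (fun t => t ^ 2 * (c t * a t)) atTop (nhds K)) :
    ∃ N, N0 ≤ N ∧ (∀ t, N ≤ t → IntegrableOn (fun v => c v * a (t + v)) (Set.Ioi 0)) ∧
      Tendsto (fun t => t * betaF c a t) atTop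
        (nhds (∫ s in Set.Ioi (0:ℝ), K * (s ^ α₁ * (1 + s) ^ α₂))) := by
  have e1 : ∀ᶠ t in atTop, c t ≤ 2 ^ (1/2 : ℝ) * c (2 * t) := by
    have h : (2:ℝ) ^ (-(1/2) : ℝ) < 2 ^ α₁ := rpow_lt_rpow_of_exponent_lt one_lt_two hα₁
    filter_upwards [(rc 2 two_pos).eventually (eventually_gt_nhds h), eventually_gt_atTop 0]
      with t ht ht0
    rw [lt_div_iff₀ (hcpos t ht0), rpow_neg (by norm_num), inv_mul_lt_iff₀ (by positivity)] at ht
    rw [mul_comm 2 t]; exact ht.le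
  have e2 : ∀ᶠ t in atTop, 2 ^ (3/2 : ℝ) * a (2 * t) ≤ a t := by
    have h : (2:ℝ) ^ α₂ < 2 ^ (-(3/2) : ℝ) := rpow_lt_rpow_of_exponent_lt one_lt_two hα₂
    filter_upwards [(ra 2 two_pos).eventually (eventually_lt_nhds h), eventually_ge_atTop N0]
      with t ht ht0
    rw [div_lt_iff₀ (hapos t ht0), rpow_neg (by norm_num), ← div_eq_inv_mul,
      lt_div_iff₀ (by positivity)] at ht
    rw [mul_comm 2 t, mul_comm]; exact ht.le
  have e3 : ∀ᶠ t in atTop, t ^ 2 * (c t * a t) < K + 1 :=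
    hprod.eventually (eventually_lt_nhds (by linarith))
  obtain ⟨N, hN⟩ := eventually_atTop.1 ((e1.and (e2.and e3)).and (eventually_ge_atTop N0))
  have hNN0 : N0 ≤ N := (hN N le_rfl).2
  have hNpos : 0 < N := hN0.trans_le hNN0
  obtain ⟨C, hC, hcu⟩ := c_uniform hcpos hcanti hc_zero hNpos fun t ht => (hN t ht).1.1
  have hau := fun {x y : ℝ} (hx : N ≤ x) (hxy : x ≤ y) =>
    le_of_doubling_upper hNpos (fun t ht => hapos t (hNN0.trans ht))
      (haanti.mono fun t (ht : N ≤ t) => hNN0.trans ht) (b := 3/2) (by norm_num)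
      (fun t ht => (hN t ht).1.2.1) hx hxy
  have hK1 : 0 < K + 1 := lt_trans (by
    have h1 := hcpos N hNpos
    have h2 := hapos N hNN0
    positivity) (hN N le_rfl).1.2.2
  set M : ℝ := (K + 1) * (C + 2 ^ (3/2 : ℝ)) with hM
  set bd : ℝ → ℝ := fun s => M * (if s ≤ 1 then s ^ (-(1/2) : ℝ) else s ^ (-(3/2) : ℝ)) with hbd
  have hbd_int : IntegrableOn bd (Set.Ioi 0) := by
    refine Integrable.const_mul ?_ M
    change IntegrableOn (fun s : ℝ => if s ≤ 1 then s ^ (-(1/2) : ℝ) else s ^ (-(3/2) : ℝ))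
      (Set.Ioi 0) volume
    rw [← Set.Ioc_union_Ioi_eq_Ioi (zero_le_one (α := ℝ))]
    refine IntegrableOn.union ?_ ?_
    · have h : IntegrableOn (fun s : ℝ => s ^ (-(1/2) : ℝ)) (Set.Ioc 0 1) :=
        (intervalIntegrable_iff_integrableOn_Ioc_of_le zero_le_one).1
          (intervalIntegral.intervalIntegrable_rpow' (by norm_num))
      refine h.congr_fun (fun s hs => ?_) measurableSet_Ioc
      simp [hs.2]
    · have h : IntegrableOn (fun s : ℝ => s ^ (-(3/2) : ℝ)) (Set.Ioi 1) :=
        integrableOn_Ioi_rpow_of_lt (by norm_num) one_pos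
      refine h.congr_fun (fun s hs => ?_) measurableSet_Ioi
      have hs' : 1 < s := hs
      simp [hs'.not_ge]
  set φ : ℝ → ℝ → ℝ := fun t s => t ^ 2 * (c (t * s) * a (t + t * s)) with hφ
  have hφpos : ∀ t, N ≤ t → ∀ s ∈ Set.Ioi (0:ℝ), 0 < φ t s := by
    intro t ht s hs
    have hs' : (0:ℝ) < s := hs
    have ht0 : 0 < t := hNpos.trans_le ht
    have h1 := hcpos (t * s) (by positivity)
    have h2 := hapos (t + t * s) (by nlinarith)
    positivity
  have hφbd : ∀ t, N ≤ t → ∀ s ∈ Set.Ioi (0:ℝ), φ t s ≤ bd s := by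
    intro t ht s hs
    have hs' : (0:ℝ) < s := hs
    have ht0 : 0 < t := hNpos.trans_le ht
    have hts : 0 < t * s := by positivity
    have hct := hcpos t ht0
    have hat := hapos t (hNN0.trans ht)
    have ha2 := hapos (t + t * s) (by nlinarith)
    have hc2 := hcpos (t * s) hts
    have hprodle := (hN t ht).1.2.2
    have h2p : (0:ℝ) < 2 ^ (3/2 : ℝ) := by positivity
    by_cases h1 : s ≤ 1
    · have hA : a (t + t * s) ≤ a t :=
        haanti (show N0 ≤ t by linarith) (show N0 ≤ t + t * s by linarith) (by linarith)
      have hC' : c (t * s) ≤ C * s ^ (-(1/2) : ℝ) * c t := by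
        have := hcu t ht (t * s) hts (by nlinarith)
        rwa [show t / (t * s) = s⁻¹ by field_simp, inv_rpow hs'.le, ← rpow_neg hs'.le] at this
      simp only [hφ, hbd, if_pos h1]
      calc t ^ 2 * (c (t * s) * a (t + t * s))
          ≤ t ^ 2 * ((C * s ^ (-(1/2) : ℝ) * c t) * a t) := by gcongr
        _ = (t ^ 2 * (c t * a t)) * (C * s ^ (-(1/2) : ℝ)) := by ring
        _ ≤ (K + 1) * (C * s ^ (-(1/2) : ℝ)) := by gcongr
        _ ≤ (K + 1) * ((C + 2 ^ (3/2 : ℝ)) * s ^ (-(1/2) : ℝ)) := by gcongr; linarith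
        _ = _ := by rw [hM]; ring
    · push Not at h1
      have hC' : c (t * s) ≤ c t := hcanti ht0 hts (by nlinarith)
      have hA : a (t + t * s) ≤ 2 ^ (3/2 : ℝ) * s ^ (-(3/2) : ℝ) * a t := by
        have h3 := hau ht (show t ≤ t + t * s by linarith)
        have h4 : s ^ (3/2 : ℝ) ≤ ((t + t * s) / t) ^ (3/2 : ℝ) := by
          refine rpow_le_rpow hs'.le ?_ (by norm_num)
          rw [le_div_iff₀ ht0]; linarith
        rw [rpow_neg hs'.le]
        have h5 : s ^ (3/2 : ℝ) * a (t + t * s) ≤ 2 ^ (3/2 : ℝ) * a t :=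
          (mul_le_mul_of_nonneg_right h4 ha2.le).trans h3
        have h6 : (0:ℝ) < s ^ (3/2 : ℝ) := by positivity
        calc a (t + t * s) = (s ^ (3/2 : ℝ))⁻¹ * (s ^ (3/2 : ℝ) * a (t + t * s)) := by field_simp
          _ ≤ (s ^ (3/2 : ℝ))⁻¹ * (2 ^ (3/2 : ℝ) * a t) := by gcongr
          _ = _ := by ring
      simp only [hφ, hbd, if_neg h1.not_ge]
      calc t ^ 2 * (c (t * s) * a (t + t * s))
          ≤ t ^ 2 * (c t * (2 ^ (3/2 : ℝ) * s ^ (-(3/2) : ℝ) * a t)) := by gcongr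
        _ = (t ^ 2 * (c t * a t)) * (2 ^ (3/2 : ℝ) * s ^ (-(3/2) : ℝ)) := by ring
        _ ≤ (K + 1) * (2 ^ (3/2 : ℝ) * s ^ (-(3/2) : ℝ)) := by gcongr
        _ ≤ (K + 1) * ((C + 2 ^ (3/2 : ℝ)) * s ^ (-(3/2) : ℝ)) := by gcongr; linarith
        _ = _ := by rw [hM]; ring
  have hφmeas : ∀ t, N ≤ t → AEStronglyMeasurable (φ t) (volume.restrict (Set.Ioi 0)) := by
    intro t ht
    have ht0 : 0 < t := hNpos.trans_le ht
    have h1 : AntitoneOn (fun s => c (t * s)) (Set.Ioi 0) := by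
      intro x hx y hy hxy
      exact hcanti (mul_pos ht0 hx) (mul_pos ht0 hy) (by gcongr)
    have h2 : AntitoneOn (fun s => a (t + t * s)) (Set.Ioi 0) := by
      intro x hx y hy hxy
      have := mul_pos ht0 hx
      have := mul_pos ht0 hy
      exact haanti (show N0 ≤ _ by linarith) (show N0 ≤ _ by linarith) (by gcongr)
    exact (((aemeasurable_restrict_of_antitoneOn measurableSet_Ioi h1).mul
      (aemeasurable_restrict_of_antitoneOn measurableSet_Ioi h2)).const_mul _).aestronglyMeasurable
  have hφae : ∀ t, N ≤ t → ∀ᵐ s ∂(volume.restrict (Set.Ioi (0:ℝ))), ‖φ t s‖ ≤ bd s := by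
    intro t ht
    refine (ae_restrict_iff' measurableSet_Ioi).2 (Eventually.of_forall fun s hs => ?_)
    rw [Real.norm_of_nonneg (hφpos t ht s hs).le]
    exact hφbd t ht s hs
  refine ⟨N, hNN0, fun t ht => ?_, ?_⟩
  · have ht0 : 0 < t := hNpos.trans_le ht
    have h1 : IntegrableOn (φ t) (Set.Ioi 0) := Integrable.mono' hbd_int (hφmeas t ht) (hφae t ht)
    have h2 : IntegrableOn (fun s => (fun v => c v * a (t + v)) (t * s)) (Set.Ioi 0) := by
      have := h1.const_mul ((t ^ 2)⁻¹)
      refine IntegrableOn.congr_fun this (fun s _ => ?_) measurableSet_Ioi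
      simp only [hφ]; field_simp
    have h3 := (integrableOn_Ioi_comp_mul_left_iff (fun v => c v * a (t + v)) 0 ht0).1 h2
    rwa [mul_zero] at h3
  · have hlim : Tendsto (fun t => ∫ s in Set.Ioi (0:ℝ), φ t s) atTop
        (nhds (∫ s in Set.Ioi (0:ℝ), K * (s ^ α₁ * (1 + s) ^ α₂))) := by
      refine tendsto_integral_filter_of_dominated_convergence bd ?_ ?_ hbd_int ?_
      · filter_upwards [eventually_ge_atTop N] with t ht using hφmeas t ht
      · filter_upwards [eventually_ge_atTop N] with t ht using hφae t ht
      · refine (ae_restrict_iff' measurableSet_Ioi).2 (Eventually.of_forall fun s hs => ?_)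
        have hs' : (0:ℝ) < s := hs
        refine (hprod.mul ((rc s hs').mul (ra (1 + s) (by linarith)))).congr' ?_
        filter_upwards [eventually_ge_atTop N] with t ht
        have ht0 : 0 < t := hNpos.trans_le ht
        have hct := hcpos t ht0
        have hat := hapos t (hNN0.trans ht)
        simp only [hφ]
        rw [show t + t * s = t * (1 + s) by ring]
        field_simp
    refine hlim.congr' ?_
    filter_upwards [eventually_ge_atTop N] with t ht
    have ht0 : 0 < t := hNpos.trans_le ht
    have h := MeasureTheory.integral_comp_mul_left_Ioi (fun v => c v * a (t + v)) 0 ht0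
    simp only [hφ]
    rw [MeasureTheory.integral_const_mul, h, mul_zero, smul_eq_mul]
    unfold betaF
    field_simp

/-! ### The limit constant and the elementary properties of `c` and `a` -/

/-- The beta integral `B(p, 1) = 1 / p` written on the half-line; the primitive is
`(s / (1 + s)) ^ p`. -/
theorem integral_beta_halfline {p : ℝ} (hp : 0 < p) :
    ∫ s in Set.Ioi (0:ℝ), s ^ (p - 1) * (1 + s) ^ (-(1 + p)) = 1 / p := by
  have hder : ∀ s ∈ Set.Ioi (0:ℝ), HasDerivAt (fun s : ℝ => (s / (1 + s)) ^ p / p)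
      (s ^ (p - 1) * (1 + s) ^ (-(1 + p))) s := by
    intro s hs
    have hs' : (0:ℝ) < s := hs
    have h1 : (0:ℝ) < 1 + s := by linarith
    have h2 : HasDerivAt (fun s : ℝ => s / (1 + s)) (((1:ℝ) * (1 + s) - s * 1) / (1 + s) ^ 2) s :=
      (hasDerivAt_id s).div ((hasDerivAt_id s).const_add 1) h1.ne'
    have h3 := (h2.rpow_const (p := p) (Or.inl (by positivity))).div_const p
    refine h3.congr_deriv ?_
    rw [div_rpow hs'.le h1.le, rpow_neg h1.le, rpow_add h1, rpow_one,
      rpow_sub_one h1.ne']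
    field_simp
    ring
  have hcont : ContinuousWithinAt (fun s : ℝ => (s / (1 + s)) ^ p / p) (Set.Ici 0) 0 := by
    refine ContinuousAt.continuousWithinAt ?_
    refine ContinuousAt.div_const ?_ p
    refine ContinuousAt.rpow_const ?_ (Or.inr hp.le)
    exact continuousAt_id.div (continuousAt_const.add continuousAt_id) (by norm_num)
  have hlim : Tendsto (fun s : ℝ => (s / (1 + s)) ^ p / p) atTop (nhds (1 / p)) := by
    have h1 : Tendsto (fun s : ℝ => s / (1 + s)) atTop (nhds 1) := by
      have h2 : Tendsto (fun s : ℝ => 1 - (1 + s)⁻¹) atTop (nhds (1 - 0)) :=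
        tendsto_const_nhds.sub (tendsto_inv_atTop_zero.comp
          (tendsto_atTop_add_const_left _ 1 tendsto_id))
      rw [sub_zero] at h2
      refine h2.congr' ?_
      filter_upwards [eventually_gt_atTop 0] with s hs
      field_simp
      ring
    have h3 := (h1.rpow_const (p := p) (Or.inl one_ne_zero)).div_const p
    rwa [one_rpow] at h3
  have h := integral_Ioi_of_hasDerivAt_of_nonneg hcont hder (fun s hs => by
    have hs' : (0:ℝ) < s := hs
    positivity) hlim
  rw [h]
  simp [zero_rpow hp.ne']

theorem gamma_const {H : ℝ} (hH1 : 0 < H) (hH2 : H < 1/2) :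
    (Real.Gamma (1/2 + H))⁻¹ * ((1/2 + H) * (Real.Gamma (1/2 - H))⁻¹) * (1 / (1/2 + H)) =
      Real.cos (π * H) / π := by
  have h := Real.Gamma_mul_Gamma_one_sub (1/2 + H)
  rw [show 1 - (1/2 + H) = 1/2 - H by ring, show π * (1/2 + H) = π * H + π / 2 by ring,
    Real.sin_add_pi_div_two] at h
  have h1 : 0 < Real.Gamma (1/2 + H) := Real.Gamma_pos_of_pos (by linarith)
  have h2 : 0 < Real.Gamma (1/2 - H) := Real.Gamma_pos_of_pos (by linarith)
  have h3 : (0:ℝ) < 1/2 + H := by linarith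
  calc _ = (Real.Gamma (1/2 + H) * Real.Gamma (1/2 - H))⁻¹ := by
        rw [mul_inv]; field_simp
    _ = _ := by rw [h, inv_div]

theorem laplace_integrable {ν : Measure ℝ}
    (hν_int : IntegrableOn (fun s : ℝ => (1 + s)⁻¹) (Set.Ioi 0) ν) {t : ℝ} (ht : 0 < t) :
    IntegrableOn (fun s : ℝ => Real.exp (-(t * s))) (Set.Ioi 0) ν := by
  refine Integrable.mono' (hν_int.const_mul ((min 1 t)⁻¹)) (by fun_prop) ?_
  refine (ae_restrict_iff' measurableSet_Ioi).2 (Eventually.of_forall fun s hs => ?_)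
  have hs' : (0:ℝ) < s := hs
  have hm : 0 < min 1 t := lt_min one_pos ht
  rw [Real.norm_of_nonneg (Real.exp_pos _).le, Real.exp_neg, ← mul_inv]
  refine inv_anti₀ (by positivity) ?_
  calc min 1 t * (1 + s) = min 1 t + min 1 t * s := by ring
    _ ≤ 1 + t * s := by
      gcongr
      · exact min_le_left _ _
      · exact min_le_right _ _
    _ ≤ Real.exp (t * s) := by linarith [Real.add_one_le_exp (t * s)]

theorem c_props {ν : Measure ℝ} {c : ℝ → ℝ}
    (hc_def : ∀ t : ℝ, 0 < t → c t = ∫ s in Set.Ioi (0:ℝ), Real.exp (-(t * s)) ∂ν)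
    (hν_int : IntegrableOn (fun s : ℝ => (1 + s)⁻¹) (Set.Ioi 0) ν)
    (hne : ∀ᶠ t in atTop, c t ≠ 0) :
    (∀ t, 0 < t → 0 < c t) ∧ AntitoneOn c (Set.Ioi 0) := by
  have hanti : AntitoneOn c (Set.Ioi 0) := by
    intro x hx y hy hxy
    rw [hc_def x hx, hc_def y hy]
    refine setIntegral_mono_on (laplace_integrable hν_int hy) (laplace_integrable hν_int hx)
      measurableSet_Ioi fun s hs => ?_
    have hs' : (0:ℝ) < s := hs
    gcongr
  refine ⟨fun t ht => ?_, hanti⟩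
  obtain ⟨T, hT, hTt⟩ := (hne.and (eventually_ge_atTop t)).exists
  have hT0 : 0 < T := ht.trans_le hTt
  have h0 : 0 ≤ c T := by
    rw [hc_def T hT0]
    exact integral_nonneg fun s => (Real.exp_pos _).le
  exact (lt_of_le_of_ne h0 (Ne.symm hT)).trans_le (hanti ht hT0 hTt)

/-- Positivity and monotonicity of `a` far out. Integrability of the defining integrand is not
assumed, but follows where `a` does not vanish since a divergent Bochner integral is `0`. -/
theorem a_props {μ : Measure ℝ} {a : ℝ → ℝ}
    (ha_def : ∀ t : ℝ, 0 < t → a t = ∫ s in Set.Ioi (0:ℝ), Real.exp (-(t * s)) * s ∂μ)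
    (hne : ∀ᶠ t in atTop, a t ≠ 0) :
    ∃ N0, 0 < N0 ∧ (∀ t, N0 ≤ t → 0 < a t) ∧ AntitoneOn a (Set.Ici N0) := by
  obtain ⟨N0, hN⟩ := eventually_atTop.1 (hne.and (eventually_gt_atTop 0))
  have hpos : ∀ t, N0 ≤ t → 0 < t := fun t ht => (hN t ht).2
  have hInt : ∀ t, N0 ≤ t → IntegrableOn (fun s : ℝ => Real.exp (-(t * s)) * s) (Set.Ioi 0) μ := by
    intro t ht
    by_contra h
    exact (hN t ht).1 ((ha_def t (hpos t ht)).trans (integral_undef h))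
  refine ⟨N0, hpos N0 le_rfl, fun t ht => ?_, fun x hx y hy hxy => ?_⟩
  · refine lt_of_le_of_ne ?_ (hN t ht).1.symm
    rw [ha_def t (hpos t ht)]
    exact setIntegral_nonneg measurableSet_Ioi fun s hs =>
      mul_nonneg (Real.exp_pos _).le (le_of_lt hs)
  · rw [ha_def x (hpos x hx), ha_def y (hpos y hy)]
    refine setIntegral_mono_on (hInt y hy) (hInt x hx) measurableSet_Ioi fun s hs => ?_
    have hs' : (0:ℝ) < s := hs
    gcongr

/-- The key asymptotics `β(t) ∼ cos(πH) / (π t)`, together with the facts about `β` near infinity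
needed to iterate it. -/
theorem beta_props {H : ℝ} (hH1 : 0 < H) (hH2 : H < 1/2) {ℓ : ℝ → ℝ}
    (hℓ_pos : ∀ᶠ t in atTop, 0 < ℓ t)
    (hℓ_slow : ∀ lam : ℝ, 0 < lam →
      Tendsto (fun t : ℝ => ℓ (t * lam) / ℓ t) atTop (nhds 1))
    {ν μ : Measure ℝ} {c a : ℝ → ℝ}
    (hc_def : ∀ t : ℝ, 0 < t → c t = ∫ s in Set.Ioi (0:ℝ), Real.exp (-(t * s)) ∂ν)
    (hν_int : IntegrableOn (fun s : ℝ => (1 + s)⁻¹) (Set.Ioi 0) ν)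
    (hc_zero : ∃ q : ℝ, -(1/2 : ℝ) < q ∧ c =O[nhdsWithin 0 (Set.Ioi 0)] fun t : ℝ => t ^ q)
    (hc_infty : Tendsto
      (fun t : ℝ => c t / ((Real.Gamma (1/2 + H))⁻¹ * t ^ (-(1/2 - H)) * ℓ t))
      atTop (nhds 1))
    (ha_def : ∀ t : ℝ, 0 < t → a t = ∫ s in Set.Ioi (0:ℝ), Real.exp (-(t * s)) * s ∂μ)
    (ha_infty : Tendsto
      (fun t : ℝ => a t / ((1/2 + H) * (Real.Gamma (1/2 - H))⁻¹ * t ^ (-(3/2 + H)) / ℓ t))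
      atTop (nhds 1)) :
    ∃ N, 0 < N ∧ (∀ t, N ≤ t → 0 < betaF c a t) ∧ AntitoneOn (betaF c a) (Set.Ici N) ∧
      Tendsto (fun t => t * betaF c a t) atTop (nhds (Real.cos (π * H) / π)) := by
  have hG1 : 0 < Real.Gamma (1/2 + H) := Real.Gamma_pos_of_pos (by linarith)
  have hG2 : 0 < Real.Gamma (1/2 - H) := Real.Gamma_pos_of_pos (by linarith)
  have hp : (0:ℝ) < 1/2 + H := by linarith
  have hcne : ∀ᶠ t in atTop, c t ≠ 0 := by
    filter_upwards [hc_infty.eventually_ne one_ne_zero] with t ht h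
    exact ht (by simp [h])
  have hane : ∀ᶠ t in atTop, a t ≠ 0 := by
    filter_upwards [ha_infty.eventually_ne one_ne_zero] with t ht h
    exact ht (by simp [h])
  obtain ⟨hcpos, hcanti⟩ := c_props hc_def hν_int hcne
  obtain ⟨N0, hN0, hapos, haanti⟩ := a_props ha_def hane
  have rc := fun lam hlam => regvar (inv_pos.2 hG1) hℓ_pos hℓ_slow hc_infty (lam := lam) hlam
  have ra : ∀ lam : ℝ, 0 < lam →
      Tendsto (fun t => a (t * lam) / a t) atTop (nhds (lam ^ (-(3/2 + H)))) := by
    intro lam hlam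
    refine regvar (K := (1/2 + H) * (Real.Gamma (1/2 - H))⁻¹) (L := fun t => (ℓ t)⁻¹)
      (by positivity) ?_ ?_ ?_ hlam
    · filter_upwards [hℓ_pos] with t ht using inv_pos.2 ht
    · intro lam hlam
      have := (hℓ_slow lam hlam).inv₀ one_ne_zero
      rw [inv_one] at this
      refine this.congr fun t => ?_
      rw [inv_div, div_eq_mul_inv, div_eq_mul_inv, inv_inv, mul_comm]
    · simpa only [div_eq_mul_inv _ (ℓ _)] using ha_infty
  have hprod : Tendsto (fun t => t ^ 2 * (c t * a t)) atTop
      (nhds ((Real.Gamma (1/2 + H))⁻¹ * ((1/2 + H) * (Real.Gamma (1/2 - H))⁻¹))) := by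
    have h := (hc_infty.mul ha_infty).const_mul
      ((Real.Gamma (1/2 + H))⁻¹ * ((1/2 + H) * (Real.Gamma (1/2 - H))⁻¹))
    rw [mul_one, mul_one] at h
    refine h.congr' ?_
    filter_upwards [hℓ_pos, eventually_gt_atTop 0] with t h1 h2
    have h3 : t ^ (-(1/2 - H)) * t ^ (-(3/2 + H)) = (t ^ 2)⁻¹ := by
      rw [← rpow_add h2, show -(1/2 - H) + -(3/2 + H) = -(2:ℕ) by push_cast; ring,
        rpow_neg h2.le, rpow_natCast]
    have h4 : 0 < t ^ (-(1/2 - H)) := by positivity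
    have h5 : 0 < t ^ (-(3/2 + H)) := by positivity
    have h6 : t ^ 2 = (t ^ (-(1/2 - H)) * t ^ (-(3/2 + H)))⁻¹ := by rw [h3, inv_inv]
    rw [h6]
    generalize t ^ (-(1/2 - H)) = X at *
    generalize t ^ (-(3/2 + H)) = Y at *
    generalize Real.Gamma (1/2 + H) = g₁ at *
    generalize Real.Gamma (1/2 - H) = g₂ at *
    generalize 1/2 + H = p at *
    field_simp
  obtain ⟨N, hNN0, hInt, hlim⟩ := beta_asymp hcpos hcanti hc_zero hN0 hapos haanti
    (by linarith : -(1/2) < -(1/2 - H)) (by linarith : -(3/2 + H) < -(3/2)) rc ra hprod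
  refine ⟨N, hN0.trans_le hNN0, fun t ht => ?_, fun x hx y hy hxy => ?_, ?_⟩
  · refine setIntegral_Ioi_pos (fun v hv => ?_) (hInt t ht)
    have hv' : (0:ℝ) < v := hv
    exact mul_pos (hcpos v hv) (hapos _ (by linarith))
  · have hx' : N ≤ x := hx
    refine setIntegral_mono_on (hInt y hy) (hInt x hx) measurableSet_Ioi fun v hv => ?_
    have hv' : (0:ℝ) < v := hv
    exact mul_le_mul_of_nonneg_left
      (haanti (show N0 ≤ x + v by linarith) (show N0 ≤ y + v by linarith) (by linarith))
      (hcpos v hv).le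
  · convert hlim using 2
    rw [MeasureTheory.integral_const_mul, ← gamma_const hH1 hH2, ← integral_beta_halfline hp]
    congr 1
    refine setIntegral_congr_fun measurableSet_Ioi fun s _ => ?_
    congr 2 <;> ring

/-- Proposition 3.3 (a) : for every `r ∈ (1,∞)` there is `N > 0` with
`0 < δ_k(t,u,v) ≤ f_k(0) (r cos(πH))^k t⁻¹` for all `u,v > 0`, `k ≥ 1`, `t ≥ N`. -/
theorem baxter_stmt7
    -- Standing hypotheses on `c` and `a` (fractional Brownian motion-type process,
    -- Hurst index `H ∈ (0,1/2)`, slowly varying function `ℓ`):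
    (H : ℝ) (hH1 : 0 < H) (hH2 : H < 1/2)
    (ℓ : ℝ → ℝ) (hℓ_meas : Measurable ℓ) (hℓ_pos : ∀ᶠ t in atTop, 0 < ℓ t)
    (hℓ_slow : ∀ lam : ℝ, 0 < lam →
      Tendsto (fun t : ℝ => ℓ (t * lam) / ℓ t) atTop (nhds 1))
    (ν μ : Measure ℝ) (hν_supp : ν (Set.Iic 0) = 0) (hμ_supp : μ (Set.Iic 0) = 0)
    (c a : ℝ → ℝ)
    (hc_def : ∀ t : ℝ, 0 < t → c t = ∫ s in Set.Ioi (0:ℝ), Real.exp (-(t * s)) ∂ν)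
    (hν_int : IntegrableOn (fun s : ℝ => (1 + s)⁻¹) (Set.Ioi 0) ν)
    (hc_blow : Tendsto c (nhdsWithin 0 (Set.Ioi 0)) atTop)
    (hc_zero : ∃ q : ℝ, -(1/2 : ℝ) < q ∧ c =O[nhdsWithin 0 (Set.Ioi 0)] fun t : ℝ => t ^ q)
    (hc_infty : Tendsto
      (fun t : ℝ => c t / ((Real.Gamma (1/2 + H))⁻¹ * t ^ (-(1/2 - H)) * ℓ t))
      atTop (nhds 1))
    (ha_def : ∀ t : ℝ, 0 < t → a t = ∫ s in Set.Ioi (0:ℝ), Real.exp (-(t * s)) * s ∂μ)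
    (ha_infty : Tendsto
      (fun t : ℝ => a t / ((1/2 + H) * (Real.Gamma (1/2 - H))⁻¹ * t ^ (-(3/2 + H)) / ℓ t))
      atTop (nhds 1))
    (r : ℝ) (hr : 1 < r) :
    ∃ N : ℝ, 0 < N ∧ ∀ (k : ℕ), 1 ≤ k → ∀ t u v : ℝ, N ≤ t → 0 < u → 0 < v →
      0 < deltaK c a k t u v ∧
        deltaK c a k t u v ≤ fk k 0 * (r * Real.cos (π * H)) ^ k * t⁻¹ := by
  obtain ⟨N, hN, hpos, hanti, hlim⟩ := beta_props hH1 hH2 hℓ_pos hℓ_slow hc_def hν_int hc_zero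
    hc_infty ha_def ha_infty
  have hcos : 0 < Real.cos (π * H) :=
    Real.cos_pos_of_mem_Ioo ⟨by nlinarith [Real.pi_pos], by nlinarith [Real.pi_pos]⟩
  have hlt : Real.cos (π * H) / π < r * Real.cos (π * H) / π := by
    have := Real.pi_pos
    gcongr
    nlinarith
  obtain ⟨N', hN'⟩ := eventually_atTop.1 (hlim.eventually (eventually_lt_nhds hlt))
  have hM : 0 < max N N' := lt_max_of_lt_left hN
  refine ⟨max N N', hM, fun k hk t u v ht hu hv => ?_⟩
  obtain ⟨k, rfl⟩ := Nat.exists_eq_add_of_le' hk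
  refine deltaK_bound hM (by positivity) (fun t ht => hpos t ((le_max_left _ _).trans ht))
    (hanti.mono (Set.Ici_subset_Ici.2 (le_max_left _ _))) (fun t ht => ?_) ht hu hv k
  rw [le_div_iff₀ (hM.trans_le ht), mul_comm]
  exact (hN' t ((le_max_right _ _).trans ht)).le
end

section
/- Let 0 < H < 1/2 and set c(t) = t^{−(1/2−H)}/Γ(1/2+H) and α(t) = t^{−(1/2+H)}/Γ(1/2−H) for t > 0. Then for every complex number z with Im z > 0, the integrals ∫_0^∞ e^{izt} c(t) dt and ∫_0^∞ e^{izt} α(t) dt converge absolutely and (−iz) · (∫_0^∞ e^{izt} c(t) dt) · (∫_0^∞ e^{izt} α(t) dt) = 1. Consequently, the autoregressive coefficient of fractional Brownian motion with Hurst index H is a(t) = −α′(t) = t^{−(3/2+H)}·(1/2+H)/Γ(1/2−H). -/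
/-!
The Laplace transform of the density `t ↦ t ^ (s - 1) / Γ(s)` at a real `r > 0` is `(1 / r) ^ s`,
by the substitution `t ↦ r t` in the Gamma integral. With `w = -iz`, so that `Re w = Im z > 0`, the
two integrals are the transforms at `w` for `s = 1/2 + H` and `s = 1/2 - H`; these exponents add up
to `1`, so for real `w` the product `w · L_s(w) · L_{1-s}(w)` equals `1`. Both transforms are
holomorphic on `Re w > 0` (differentiation under the integral sign), so the identity theorem extends
the relation to the whole half-plane. Applying it to the product rather than to each factor makes
a choice of branch for `w ^ s` unnecessary.
-/

open Real MeasureTheory Filter Set Complex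

/-- The Laplace transform at `w` of the density `t ^ (s - 1) / Γ(s)` on `(0, ∞)`. -/
noncomputable def laplacePow (s : ℝ) (w : ℂ) : ℂ :=
  ∫ t in Set.Ioi (0:ℝ), Complex.exp (-(w * t)) * ((t ^ (s - 1) / Real.Gamma s : ℝ) : ℂ)

lemma aestronglyMeasurable_exp_mul_rpow (s c : ℝ) (w : ℂ) :
    AEStronglyMeasurable
      (fun t : ℝ => Complex.exp (-(w * t)) * ((t ^ (s - 1) / c : ℝ) : ℂ))
      (volume.restrict (Set.Ioi 0)) := by
  have h : Measurable
      (fun t : ℝ => Complex.exp (-(w * t)) * ((t ^ (s - 1) / c : ℝ) : ℂ)) := by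
    fun_prop
  exact h.aestronglyMeasurable

lemma integrableOn_rpow_mul_exp {q b : ℝ} (hq : -1 < q) (hb : 0 < b) :
    IntegrableOn (fun t : ℝ => t ^ q * Real.exp (-(b * t))) (Set.Ioi 0) := by
  simpa using integrableOn_rpow_mul_exp_neg_mul_rpow hq zero_lt_one hb

lemma integrableOn_exp_mul_rpow {s : ℝ} (hs : 0 < s) {w : ℂ} (hw : 0 < w.re) :
    IntegrableOn
      (fun t : ℝ => Complex.exp (-(w * t)) * ((t ^ (s - 1) / Real.Gamma s : ℝ) : ℂ))
      (Set.Ioi 0) := by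
  refine Integrable.mono'
    ((integrableOn_rpow_mul_exp (q := s - 1) (by linarith) hw).div_const (Real.Gamma s))
    (aestronglyMeasurable_exp_mul_rpow s _ w) ?_
  refine (ae_restrict_iff' measurableSet_Ioi).2 (Eventually.of_forall fun t ht => le_of_eq ?_)
  have ht' : (0:ℝ) < t := ht
  have hG := Real.Gamma_pos_of_pos hs
  have hp : 0 ≤ t ^ (s - 1) / Real.Gamma s := by positivity
  rw [norm_mul, Complex.norm_exp, Complex.norm_real, Real.norm_of_nonneg hp]
  simp
  ring

/-- Differentiation under the integral sign: for `Re u > Re w / 2` the `u`-derivative of the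
integrand is dominated by `t ^ s * exp (-(Re w / 2) t) / Γ(s)`, which is integrable. -/
lemma differentiableAt_laplacePow {s : ℝ} (hs : 0 < s) {w : ℂ} (hw : 0 < w.re) :
    DifferentiableAt ℂ (laplacePow s) w := by
  have hG := Real.Gamma_pos_of_pos hs
  have hopen : IsOpen {u : ℂ | w.re / 2 < u.re} := isOpen_lt continuous_const Complex.continuous_re
  refine (hasDerivAt_integral_of_dominated_loc_of_deriv_le
    (μ := volume.restrict (Set.Ioi (0:ℝ))) (s := {u : ℂ | w.re / 2 < u.re})
    (F := fun (u : ℂ) (t : ℝ) =>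
      Complex.exp (-(u * t)) * ((t ^ (s - 1) / Real.Gamma s : ℝ) : ℂ))
    (F' := fun (u : ℂ) (t : ℝ) =>
      -(t : ℂ) * (Complex.exp (-(u * t)) * ((t ^ (s - 1) / Real.Gamma s : ℝ) : ℂ)))
    (bound := fun t : ℝ => t ^ s * Real.exp (-(w.re / 2 * t)) / Real.Gamma s)
    (hopen.mem_nhds (by simp only [Set.mem_ofPred_eq]; linarith))
    (Eventually.of_forall fun u => aestronglyMeasurable_exp_mul_rpow s _ u)
    (integrableOn_exp_mul_rpow hs hw) ?_ ?_ ?_ ?_).2.differentiableAt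
  · exact (by fun_prop : Measurable fun t : ℝ => -(t : ℂ)).aestronglyMeasurable.mul
      (aestronglyMeasurable_exp_mul_rpow s _ w)
  · refine (ae_restrict_iff' measurableSet_Ioi).2 (Eventually.of_forall fun t ht u hu => ?_)
    have ht' : (0:ℝ) < t := ht
    have hu' : w.re / 2 < u.re := hu
    have hp : 0 ≤ t ^ (s - 1) / Real.Gamma s := by positivity
    have h1 : t ^ s = t * t ^ (s - 1) := by
      rw [Real.rpow_sub_one ht'.ne']; field_simp
    have h2 : Real.exp (-(u.re * t)) ≤ Real.exp (-(w.re / 2 * t)) := by gcongr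
    rw [norm_mul, norm_mul, norm_neg, Complex.norm_exp, Complex.norm_real, Complex.norm_real,
      Real.norm_of_nonneg hp, Real.norm_of_nonneg ht'.le]
    have h3 : (-(u * (t : ℂ))).re = -(u.re * t) := by simp
    rw [h3, h1]
    calc t * (Real.exp (-(u.re * t)) * (t ^ (s - 1) / Real.Gamma s))
        ≤ t * (Real.exp (-(w.re / 2 * t)) * (t ^ (s - 1) / Real.Gamma s)) := by gcongr
      _ = _ := by ring
  · exact (integrableOn_rpow_mul_exp (by linarith) (by linarith)).div_const _
  · refine Eventually.of_forall fun t u _ => ?_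
    have h := (((hasDerivAt_id u).mul_const (t : ℂ)).neg.cexp).mul_const
      ((t ^ (s - 1) / Real.Gamma s : ℝ) : ℂ)
    refine h.congr_deriv ?_
    simp only [id, Pi.neg_apply]
    ring

lemma laplacePow_ofReal {s r : ℝ} (hs : 0 < s) (hr : 0 < r) :
    laplacePow s r = (((1 / r) ^ s : ℝ) : ℂ) := by
  have hG := Real.Gamma_pos_of_pos hs
  have h : ∀ t : ℝ, Complex.exp (-((r : ℂ) * t)) * ((t ^ (s - 1) / Real.Gamma s : ℝ) : ℂ)
      = ((t ^ (s - 1) * Real.exp (-(r * t)) / Real.Gamma s : ℝ) : ℂ) := by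
    intro t
    push_cast
    ring
  simp only [laplacePow, h]
  rw [integral_complex_ofReal, integral_div, Real.integral_rpow_mul_exp_neg_mul_Ioi hs hr,
    mul_div_cancel_right₀ _ hG.ne']

/-- The relation holds on the positive reals by `laplacePow_ofReal`, hence on the right half-plane
by the identity theorem. -/
lemma mul_laplacePow_mul_laplacePow {s s' : ℝ} (hs : 0 < s) (hs' : 0 < s') (hss : s + s' = 1)
    {w : ℂ} (hw : 0 < w.re) : w * laplacePow s w * laplacePow s' w = 1 := by
  have hopen : IsOpen {u : ℂ | 0 < u.re} := isOpen_lt continuous_const Complex.continuous_re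
  have hconn : IsPreconnected {u : ℂ | 0 < u.re} :=
    (convex_halfSpace_re_gt 0).isPreconnected
  have hd : DifferentiableOn ℂ (fun u => u * laplacePow s u * laplacePow s' u)
      {u : ℂ | 0 < u.re} := fun u hu =>
    ((differentiableAt_id.mul (differentiableAt_laplacePow hs hu)).mul
      (differentiableAt_laplacePow hs' hu)).differentiableWithinAt
  have hreal : ∀ r : ℝ, 0 < r → (r : ℂ) * laplacePow s r * laplacePow s' r = 1 := by
    intro r hr
    rw [laplacePow_ofReal hs hr, laplacePow_ofReal hs' hr, mul_assoc, ← Complex.ofReal_mul,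
      ← Real.rpow_add (by positivity), hss, Real.rpow_one, ← Complex.ofReal_mul,
      mul_one_div_cancel hr.ne', Complex.ofReal_one]
  refine (hd.analyticOnNhd hopen).eqOn_of_preconnected_of_frequently_eq
    (g := fun _ => (1 : ℂ)) analyticOnNhd_const hconn (z₀ := 1) (by simp) ?_ hw
  -- The reals `x > 1` near `1` are points of agreement accumulating at `1`.
  have ht : Tendsto (fun x : ℝ => (x : ℂ)) (nhdsWithin 1 (Set.Ioi 1)) (nhdsWithin 1 {1}ᶜ) := by
    refine tendsto_nhdsWithin_iff.2 ⟨?_, ?_⟩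
    · have := Complex.continuous_ofReal.tendsto (1:ℝ)
      rw [Complex.ofReal_one] at this
      exact this.mono_left nhdsWithin_le_nhds
    · filter_upwards [self_mem_nhdsWithin] with x hx
      have hx' : (1:ℝ) < x := hx
      simpa using hx'.ne'
  refine ht.frequently (Eventually.frequently ?_)
  filter_upwards [self_mem_nhdsWithin] with x hx
  exact hreal x (lt_trans zero_lt_one hx)

/-- For `0 < H < 1/2`, with `c(t) = t^{-(1/2-H)}/Γ(1/2+H)` and
`α(t) = t^{-(1/2+H)}/Γ(1/2-H)` on `(0,∞)` : for every `z` with `Im z > 0` the Fourier-Laplace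
integrals converge absolutely and `(-iz)(∫_0^∞ e^{izt} c(t) dt)(∫_0^∞ e^{izt} α(t) dt) = 1`;
consequently the autoregressive coefficient of fractional Brownian motion is
`a(t) = -α'(t) = t^{-(3/2+H)} (1/2+H)/Γ(1/2-H)`. -/
theorem baxter_stmt18 (H : ℝ) (hH1 : 0 < H) (hH2 : H < 1/2) :
    (∀ z : ℂ, 0 < z.im →
        IntegrableOn
            (fun t : ℝ => Complex.exp (Complex.I * z * t)
              * ((t ^ (-(1/2 - H)) / Real.Gamma (1/2 + H) : ℝ) : ℂ)) (Set.Ioi 0) ∧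
          IntegrableOn
            (fun t : ℝ => Complex.exp (Complex.I * z * t)
              * ((t ^ (-(1/2 + H)) / Real.Gamma (1/2 - H) : ℝ) : ℂ)) (Set.Ioi 0) ∧
          (-(Complex.I * z))
              * (∫ t in Set.Ioi (0:ℝ), Complex.exp (Complex.I * z * t)
                  * ((t ^ (-(1/2 - H)) / Real.Gamma (1/2 + H) : ℝ) : ℂ))
              * (∫ t in Set.Ioi (0:ℝ), Complex.exp (Complex.I * z * t)
                  * ((t ^ (-(1/2 + H)) / Real.Gamma (1/2 - H) : ℝ) : ℂ)) = 1) ∧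
      ∀ t : ℝ, 0 < t →
        HasDerivAt (fun t : ℝ => t ^ (-(1/2 + H)) / Real.Gamma (1/2 - H))
          (-(t ^ (-(3/2 + H)) * (1/2 + H) / Real.Gamma (1/2 - H))) t := by
  refine ⟨fun z hz => ?_, fun t ht => ?_⟩
  · have hw : 0 < (-(Complex.I * z)).re := by simpa using hz
    have e1 : -(1/2 - H) = (1/2 + H) - 1 := by ring
    have e2 : -(1/2 + H) = (1/2 - H) - 1 := by ring
    have e3 : ∀ t : ℝ, Complex.I * z * t = -(-(Complex.I * z) * t) := fun t => by ring
    simp only [e1, e2, e3]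
    have hs : 0 < 1/2 + H := by linarith
    have hs' : 0 < 1/2 - H := by linarith
    exact ⟨integrableOn_exp_mul_rpow hs hw, integrableOn_exp_mul_rpow hs' hw,
      mul_laplacePow_mul_laplacePow hs hs' (by ring) hw⟩
  · have h := (Real.hasDerivAt_rpow_const (p := -(1/2 + H)) (Or.inl ht.ne')).div_const
      (Real.Gamma (1/2 - H))
    refine h.congr_deriv ?_
    rw [show -(1/2 + H) - 1 = -(3/2 + H) by ring]
    ring
end
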